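/- arXiv:2006.16213 — 3 statements merged into one kernel-verified Lean document; each statement's English description precedes it below -/
import Mathlib

section
/- Let X and Y be non-empty subsets of ℝ, let p be a positive integer, and let K : X × Y → ℝ be a bounded TN_p kernel. Then there exists a sequence (K_l)_{l≥1} of TP_p kernels on X × Y that converges to K locally uniformly on the set of points of the interior of X × Y (in ℝ²) at which K is continuous. Moreover, if X = Y and K is symmetric, then the kernels K_l may be chosen to be symmetric. -/
/-- A kernel is `TN_p` if all determinants of size at most `p` drawn from
increasing tuples are non-negative. -/
def IsTNKernelOfOrder (p : ℕ) {X Y : Type*} [LinearOrder X] [LinearOrder Y]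
    (K : X → Y → ℝ) : Prop :=
  ∀ n : ℕ, n ≤ p → ∀ (x : Fin n → X) (y : Fin n → Y), StrictMono x → StrictMono y →
    0 ≤ (Matrix.of fun i j : Fin n => K (x i) (y j)).det

/-- A kernel is `TP_p` if all determinants of size at most `p` drawn from
increasing tuples are positive. -/
def IsTPKernelOfOrder (p : ℕ) {X Y : Type*} [LinearOrder X] [LinearOrder Y]
    (K : X → Y → ℝ) : Prop :=
  ∀ n : ℕ, n ≤ p → ∀ (x : Fin n → X) (y : Fin n → Y), StrictMono x → StrictMono y →
    0 < (Matrix.of fun i j : Fin n => K (x i) (y j)).det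

/-!
Restrict `K` to a finite grid, giving a totally non-negative matrix `A` of order `p`, and put
`A ⊕ 1`, with an identity block of size `p`, on the grid extended by `p` distant nodes. Averaging
in each variable with weights proportional to `1 / cosh (c (x - node))` gives a kernel
`W (A ⊕ 1) Vᵀ`. Up to positive factors in `x` and in `y`, the kernel `1 / cosh (c (x - y))` is the
Cauchy kernel `1 / (e ^ (2 * c * x) + e ^ (2 * c * y))`, so `W` and `V` are totally positive. Since
`A ⊕ 1` is totally non-negative and has a positive minor of every order up to `p`, Cauchy–Binet
makes the product totally positive of order `p`. As the grid gets finer and `c` tends to infinity,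
the weights concentrate near the evaluation point; if `c` also outgrows the entries of `A`, the far
nodes do not matter and the averages converge to `K`, uniformly near each point of continuity.
-/

open Matrix Filter Topology

section CauchyBinet

variable {m ι R : Type*} [Fintype m] [DecidableEq m] [Fintype ι]

theorem det_mul_eq_sum_prod_mul_det_submatrix [CommRing R] (P : Matrix m ι R)
    (Q : Matrix ι m R) :
    (P * Q).det = ∑ f : m → ι, (∏ i, P i (f i)) * (Q.submatrix f id).det := by
  classical
  have rows_mul : P * Q = fun i => ∑ a, P i a • Q a := by
    ext i j
    simp [Matrix.mul_apply]
  rw [rows_mul]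
  refine (detRowAlternating.toMultilinearMap.map_sum fun i a => P i a • Q a).trans ?_
  exact Finset.sum_congr rfl fun f _ =>
    detRowAlternating.toMultilinearMap.map_smul_univ (fun i => P i (f i)) fun i => Q (f i)

/-- Cauchy–Binet, summed over all index maps instead of increasing ones: each minor is counted once
for every ordering of its indices, whence the factorial. -/
theorem sum_det_submatrix_mul_det_submatrix [CommRing R] (P : Matrix m ι R) (Q : Matrix ι m R) :
    ∑ f : m → ι, (P.submatrix id f).det * (Q.submatrix f id).det =
      (Fintype.card m).factorial * (P * Q).det := by
  have expand_minor (f : m → ι) : (P.submatrix id f).det * (Q.submatrix f id).det =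
      ∑ σ : Equiv.Perm m, (∏ i, P i (f (σ i))) * (Q.submatrix (f ∘ σ) id).det := by
    rw [← det_transpose, det_apply', Finset.sum_mul]
    refine Finset.sum_congr rfl fun σ _ => ?_
    have permuted : (Q.submatrix (f ∘ σ) id).det = σ.sign * (Q.submatrix f id).det :=
      det_permute σ (Q.submatrix f id)
    rw [permuted]
    simp only [transpose_apply, submatrix_apply, id_eq]
    ring
  have sum_reindexed (σ : Equiv.Perm m) :
      ∑ f : m → ι, (∏ i, P i (f (σ i))) * (Q.submatrix (f ∘ σ) id).det = (P * Q).det := by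
    rw [det_mul_eq_sum_prod_mul_det_submatrix]
    exact Fintype.sum_equiv (Equiv.arrowCongr σ.symm (Equiv.refl ι)) _ _ fun f => rfl
  simp_rw [expand_minor]
  rw [Finset.sum_comm]
  simp only [sum_reindexed, Finset.sum_const, Finset.card_univ, Fintype.card_perm, nsmul_eq_mul]

end CauchyBinet

section OrderedMinors

variable {n : ℕ} {ι R : Type*} [LinearOrder ι] [CommRing R] [LinearOrder R]
  [IsStrictOrderedRing R] {P : Matrix (Fin n) ι R} {Q : Matrix ι (Fin n) R}

theorem det_submatrix_mul_det_submatrix_nonneg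
    (hP : ∀ f : Fin n → ι, StrictMono f → 0 ≤ (P.submatrix id f).det)
    (hQ : ∀ f : Fin n → ι, StrictMono f → 0 ≤ (Q.submatrix f id).det) (f : Fin n → ι) :
    0 ≤ (P.submatrix id f).det * (Q.submatrix f id).det := by
  by_cases hf : f.Injective
  · set σ := Tuple.sort f
    have sorted : StrictMono (f ∘ σ) :=
      (Tuple.monotone_sort f).strictMono_of_injective (hf.comp σ.injective)
    have hPσ : (P.submatrix id (f ∘ σ)).det = σ.sign * (P.submatrix id f).det :=
      det_permute' σ (P.submatrix id f)
    have hQσ : (Q.submatrix (f ∘ σ) id).det = σ.sign * (Q.submatrix f id).det :=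
      det_permute σ (Q.submatrix f id)
    have sign_mul_sign : ((σ.sign : ℤ) : R) * (σ.sign : ℤ) = 1 := by
      rw [← Int.cast_mul, Int.units_coe_mul_self, Int.cast_one]
    calc 0 ≤ (P.submatrix id (f ∘ σ)).det * (Q.submatrix (f ∘ σ) id).det :=
          mul_nonneg (hP _ sorted) (hQ _ sorted)
      _ = (σ.sign * σ.sign) * ((P.submatrix id f).det * (Q.submatrix f id).det) := by
          rw [hPσ, hQσ]; ring
      _ = _ := by rw [sign_mul_sign, one_mul]
  · obtain ⟨i, j, hij, hne⟩ := Function.not_injective_iff.1 hf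
    rw [det_zero_of_row_eq hne (M := Q.submatrix f id) (by ext k; simp [hij]), mul_zero]

variable [Fintype ι]

theorem det_mul_nonneg_of_minors
    (hP : ∀ f : Fin n → ι, StrictMono f → 0 ≤ (P.submatrix id f).det)
    (hQ : ∀ f : Fin n → ι, StrictMono f → 0 ≤ (Q.submatrix f id).det) : 0 ≤ (P * Q).det := by
  have h : 0 ≤ ∑ f : Fin n → ι, (P.submatrix id f).det * (Q.submatrix f id).det :=
    Finset.sum_nonneg fun f _ => det_submatrix_mul_det_submatrix_nonneg hP hQ f
  rw [sum_det_submatrix_mul_det_submatrix] at h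
  exact nonneg_of_mul_nonneg_right h (by positivity)

theorem det_mul_pos_of_minors
    (hP : ∀ f : Fin n → ι, StrictMono f → 0 ≤ (P.submatrix id f).det)
    (hQ : ∀ f : Fin n → ι, StrictMono f → 0 ≤ (Q.submatrix f id).det) {f : Fin n → ι}
    (hPf : 0 < (P.submatrix id f).det) (hQf : 0 < (Q.submatrix f id).det) :
    0 < (P * Q).det := by
  have h : 0 < ∑ f : Fin n → ι, (P.submatrix id f).det * (Q.submatrix f id).det :=
    Finset.sum_pos' (fun f _ => det_submatrix_mul_det_submatrix_nonneg hP hQ f)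
      ⟨f, Finset.mem_univ f, mul_pos hPf hQf⟩
  rw [sum_det_submatrix_mul_det_submatrix] at h
  exact pos_of_mul_pos_right h (by positivity)

end OrderedMinors

section Kernels

variable {p : ℕ} {α β γ δ : Type*} [LinearOrder α] [LinearOrder β] [LinearOrder γ] [LinearOrder δ]

theorem IsTPKernelOfOrder.isTNKernelOfOrder {K : α → β → ℝ} (hK : IsTPKernelOfOrder p K) :
    IsTNKernelOfOrder p K :=
  fun n hn x y hx hy => (hK n hn x y hx hy).le

theorem IsTNKernelOfOrder.comp_strictMono {K : α → β → ℝ} (hK : IsTNKernelOfOrder p K)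
    {f : γ → α} {g : δ → β} (hf : StrictMono f) (hg : StrictMono g) :
    IsTNKernelOfOrder p fun c d => K (f c) (g d) :=
  fun n hn x y hx hy => hK n hn (f ∘ x) (g ∘ y) (hf.comp hx) (hg.comp hy)

theorem IsTPKernelOfOrder.comp_strictMono {K : α → β → ℝ} (hK : IsTPKernelOfOrder p K)
    {f : γ → α} {g : δ → β} (hf : StrictMono f) (hg : StrictMono g) :
    IsTPKernelOfOrder p fun c d => K (f c) (g d) :=
  fun n hn x y hx hy => hK n hn (f ∘ x) (g ∘ y) (hf.comp hx) (hg.comp hy)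

theorem IsTPKernelOfOrder.flip {K : α → β → ℝ} (hK : IsTPKernelOfOrder p K) :
    IsTPKernelOfOrder p fun b a => K a b := by
  intro n hn x y hx hy
  rw [← det_transpose]
  exact hK n hn y x hy hx

theorem IsTPKernelOfOrder.rescale {K : α → β → ℝ} (hK : IsTPKernelOfOrder p K)
    {f : α → ℝ} {g : β → ℝ} (hf : ∀ a, 0 < f a) (hg : ∀ b, 0 < g b) :
    IsTPKernelOfOrder p fun a b => f a * (g b * K a b) := by
  intro n hn x y hx hy
  have det_scaled := det_mul_column (fun i => f (x i))
    (of fun i j => g (y j) * (of fun i j => K (x i) (y j)) i j)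
  rw [det_mul_row] at det_scaled
  refine det_scaled.symm ▸ mul_pos ?_ (mul_pos ?_ (hK n hn x y hx hy))
  · exact Finset.prod_pos fun i _ => hf (x i)
  · exact Finset.prod_pos fun j _ => hg (y j)

theorem IsTNKernelOfOrder.mul [Fintype β] {A : Matrix α β ℝ} {B : Matrix β γ ℝ}
    (hA : IsTNKernelOfOrder p A) (hB : IsTNKernelOfOrder p B) : IsTNKernelOfOrder p (A * B) :=
  fun n hn x y hx hy => det_mul_nonneg_of_minors (P := A.submatrix x id) (Q := B.submatrix id y)
    (fun f hf => hA n hn x f hx hf) fun f hf => hB n hn f y hf hy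

theorem IsTPKernelOfOrder.mul_isTN_mul [Fintype β] [Fintype γ] {A : Matrix α β ℝ}
    {E : Matrix β γ ℝ} {B : Matrix γ δ ℝ} (hA : IsTPKernelOfOrder p A)
    (hE : IsTNKernelOfOrder p E) (hB : IsTPKernelOfOrder p B)
    (hE_minor : ∀ n ≤ p, ∃ (f : Fin n → β) (g : Fin n → γ), StrictMono f ∧ StrictMono g ∧
      0 < (E.submatrix f g).det) :
    IsTPKernelOfOrder p (A * E * B) := by
  intro n hn x y hx hy
  obtain ⟨f, g, hf, hg, hfg⟩ := hE_minor n hn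
  have hEB_minor : 0 < ((E * B).submatrix f y).det :=
    det_mul_pos_of_minors (P := E.submatrix f id) (Q := B.submatrix id y)
      (fun h hh => hE n hn f h hf hh) (fun h hh => (hB n hn h y hh hy).le) hfg (hB n hn g y hg hy)
  rw [Matrix.mul_assoc]
  exact det_mul_pos_of_minors (P := A.submatrix x id) (Q := (E * B).submatrix id y)
    (fun h hh => (hA n hn x h hx hh).le)
    (fun h hh => hE.mul hB.isTNKernelOfOrder n hn h y hh hy) (hA n hn x f hx hf) hEB_minor

end Kernels

section Padding

variable {α β : Type*} (γ : Type*)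

/-- The block-diagonal matrix `A ⊕ 1`, the rows and columns of the identity block coming after
those of `A`. It makes some minor of each order up to the size of `γ` positive. -/
def padOne [DecidableEq γ] (A : Matrix α β ℝ) : Matrix (α ⊕ₗ γ) (β ⊕ₗ γ) ℝ :=
  (fromBlocks A 0 0 1).submatrix ofLex ofLex

variable {γ}

theorem transpose_padOne [DecidableEq γ] (A : Matrix α β ℝ) : (padOne γ A)ᵀ = padOne γ Aᵀ := by
  rw [padOne, transpose_submatrix, fromBlocks_transpose, transpose_zero, transpose_zero,
    transpose_one, padOne]

theorem padOne_inr_inr [DecidableEq γ] (A : Matrix α β ℝ) (c d : γ) :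
    padOne γ A (Sum.inrₗ c) (Sum.inrₗ d) = (1 : Matrix γ γ ℝ) c d :=
  rfl

theorem padOne_inr_left_of_ne [DecidableEq γ] (A : Matrix α β ℝ) {c : γ} {b : β ⊕ₗ γ}
    (h : b ≠ Sum.inrₗ c) : padOne γ A (Sum.inrₗ c) b = 0 := by
  rcases b with b | d
  · rfl
  · exact one_apply_ne fun hcd => h (congrArg Sum.inrₗ hcd.symm)

theorem padOne_inr_right_of_ne [DecidableEq γ] (A : Matrix α β ℝ) {a : α ⊕ₗ γ} {d : γ}
    (h : a ≠ Sum.inrₗ d) : padOne γ A a (Sum.inrₗ d) = 0 := by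
  rw [← transpose_apply (padOne γ A), transpose_padOne, padOne_inr_left_of_ne _ h]

theorem abs_padOne_le [DecidableEq γ] {A : Matrix α β ℝ} {M : ℝ} (hA : ∀ a b, |A a b| ≤ M)
    (hM : 1 ≤ M) (a : α ⊕ₗ γ) (b : β ⊕ₗ γ) : |padOne γ A a b| ≤ M := by
  have M_nonneg : 0 ≤ M := zero_le_one.trans hM
  rw [padOne, submatrix_apply]
  rcases ofLex a with a | c <;> rcases ofLex b with b | d
  · exact hA a b
  · simpa using M_nonneg
  · simpa using M_nonneg
  · rw [fromBlocks_apply₂₂, one_apply]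
    split_ifs <;> simpa

theorem exists_strictMono_inl_of_le_inl {ι : Type*} [Preorder ι] [Preorder α] [Preorder γ]
    {f : ι → α ⊕ₗ γ} (hf : StrictMono f) {a : α} (hfa : ∀ i, f i ≤ Sum.inlₗ a) :
    ∃ g : ι → α, StrictMono g ∧ ∀ i, f i = Sum.inlₗ (g i) := by
  have f_eq_inl (i : ι) : ∃ b, f i = Sum.inlₗ b := by
    rcases hi : f i with b | c
    · exact ⟨b, rfl⟩
    · exact absurd (hi ▸ hfa i) Sum.Lex.not_inr_le_inl
  choose g hg using f_eq_inl
  refine ⟨g, fun i j hij => ?_, hg⟩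
  have := hf hij
  rwa [hg, hg, Sum.Lex.inl_lt_inl_iff] at this

theorem det_submatrix_padOne_of_last [DecidableEq γ] {A : Matrix α β ℝ} {n : ℕ}
    {x : Fin (n + 1) → α ⊕ₗ γ} {y : Fin (n + 1) → β ⊕ₗ γ} (hy : y.Injective) {c : γ}
    (hxc : x (Fin.last n) = Sum.inrₗ c) (hyc : y (Fin.last n) = Sum.inrₗ c) :
    ((padOne γ A).submatrix x y).det =
      ((padOne γ A).submatrix (x ∘ Fin.castSucc) (y ∘ Fin.castSucc)).det := by
  rw [det_succ_row _ (Fin.last n), Fintype.sum_eq_single (Fin.last n)]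
  · rw [submatrix_apply, hxc, hyc, padOne_inr_inr, one_apply_eq, Even.neg_one_pow ⟨_, rfl⟩,
      one_mul, one_mul, submatrix_submatrix, Fin.succAbove_last]
  · intro j hj
    have y_ne : y j ≠ Sum.inrₗ c := fun h => hj (hy (h.trans hyc.symm))
    rw [submatrix_apply, hxc, padOne_inr_left_of_ne A y_ne, mul_zero, zero_mul]

variable {p : ℕ} [LinearOrder α] [LinearOrder β] [LinearOrder γ]

theorem isTNKernelOfOrder_padOne {A : Matrix α β ℝ} (hA : IsTNKernelOfOrder p A) :
    IsTNKernelOfOrder p (padOne γ A) := by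
  intro n
  induction n with
  | zero => simp
  | succ n ih =>
    intro hn x y hx hy
    have hx_le (i) : x i ≤ x (Fin.last n) := hx.monotone (Fin.le_last i)
    have hy_le (i) : y i ≤ y (Fin.last n) := hy.monotone (Fin.le_last i)
    have zero_column {d : γ} (hyd : y (Fin.last n) = Sum.inrₗ d)
        (hxd : x (Fin.last n) < Sum.inrₗ d) : ((padOne γ A).submatrix x y).det = 0 :=
      det_eq_zero_of_column_eq_zero (Fin.last n) fun i => by
        rw [submatrix_apply, hyd, padOne_inr_right_of_ne A ((hx_le i).trans_lt hxd).ne]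
    have zero_row {c : γ} (hxc : x (Fin.last n) = Sum.inrₗ c)
        (hyc : y (Fin.last n) < Sum.inrₗ c) : ((padOne γ A).submatrix x y).det = 0 :=
      det_eq_zero_of_row_eq_zero (Fin.last n) fun j => by
        rw [submatrix_apply, hxc, padOne_inr_left_of_ne A ((hy_le j).trans_lt hyc).ne]
    change 0 ≤ ((padOne γ A).submatrix x y).det
    rcases hxl : x (Fin.last n) with a | c <;> rcases hyl : y (Fin.last n) with b | d
    · obtain ⟨x', hx', hxx'⟩ := exists_strictMono_inl_of_le_inl hx (hxl ▸ hx_le)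
      obtain ⟨y', hy', hyy'⟩ := exists_strictMono_inl_of_le_inl hy (hyl ▸ hy_le)
      simpa only [funext hxx', funext hyy'] using! hA (n + 1) hn x' y' hx' hy'
    · exact (zero_column hyl (hxl ▸ Sum.Lex.inl_lt_inr a d)).ge
    · exact (zero_row hxl (hyl ▸ Sum.Lex.inl_lt_inr b c)).ge
    · rcases lt_trichotomy c d with hcd | rfl | hdc
      · exact (zero_column hyl (hxl ▸ Sum.Lex.inr_lt_inr_iff.2 hcd)).ge
      · rw [det_submatrix_padOne_of_last hy.injective hxl hyl]
        exact ih (Nat.le_of_succ_le hn) _ _ (hx.comp Fin.strictMono_castSucc)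
          (hy.comp Fin.strictMono_castSucc)
      · exact (zero_row hxl (hyl ▸ Sum.Lex.inr_lt_inr_iff.2 hdc)).ge

theorem exists_padOne_minor_pos (A : Matrix α β ℝ) {n : ℕ} (hn : n ≤ p) :
    ∃ (f : Fin n → α ⊕ₗ Fin p) (g : Fin n → β ⊕ₗ Fin p), StrictMono f ∧ StrictMono g ∧
      0 < ((padOne (Fin p) A).submatrix f g).det := by
  refine ⟨fun i => Sum.inrₗ (Fin.castLE hn i), fun i => Sum.inrₗ (Fin.castLE hn i),
    Sum.Lex.inr_strictMono.comp (Fin.strictMono_castLE hn),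
    Sum.Lex.inr_strictMono.comp (Fin.strictMono_castLE hn), ?_⟩
  have minor_eq_one : (padOne (Fin p) A).submatrix (fun i => Sum.inrₗ (Fin.castLE hn i))
      (fun i => Sum.inrₗ (Fin.castLE hn i)) = 1 :=
    submatrix_one _ (Fin.castLE_injective hn)
  rw [minor_eq_one, det_one]
  exact one_pos

end Padding

section CauchyKernel

/-- Chio condensation. -/
theorem det_eq_mul_det_of_pivot {F : Type*} [Field F] {n : ℕ}
    (M : Matrix (Fin (n + 1)) (Fin (n + 1)) F) (pivot_ne : M 0 0 ≠ 0) :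
    M.det = M 0 0 *
      (of fun i j : Fin n => M i.succ j.succ - M i.succ 0 / M 0 0 * M 0 j.succ).det := by
  let c : Fin (n + 1) → F := Fin.cons 0 fun i => M i.succ 0 / M 0 0
  let B : Matrix (Fin (n + 1)) (Fin (n + 1)) F := of fun i j => M i j - c i * M 0 j
  have B_column_zero (i : Fin n) : B i.succ 0 = 0 := by
    simp [B, c, div_mul_cancel₀ _ pivot_ne]
  have det_eq : M.det = B.det :=
    det_eq_of_forall_row_eq_smul_add_const c 0 rfl fun i j => by simp [B, c]
  rw [det_eq, det_succ_column_zero, Fin.sum_univ_succ]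
  simp only [B_column_zero, mul_zero, zero_mul, Finset.sum_const_zero, add_zero, Fin.val_zero,
    pow_zero, one_mul, Fin.succAbove_zero]
  congr 1
  simp [B, c]

theorem det_cauchy_pos {n : ℕ} {a b : Fin n → ℝ} (ha : StrictMono a) (hb : StrictMono b)
    (ha_pos : ∀ i, 0 < a i) (hb_pos : ∀ j, 0 < b j) :
    0 < (of fun i j : Fin n => (a i + b j)⁻¹).det := by
  induction n with
  | zero => simp
  | succ n ih =>
    have sum_pos (i j) : 0 < a i + b j := add_pos (ha_pos i) (hb_pos j)
    have condensed (i j : Fin n) :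
        (a i.succ + b j.succ)⁻¹ -
            (a i.succ + b 0)⁻¹ / (a 0 + b 0)⁻¹ * (a 0 + b j.succ)⁻¹ =
          (a i.succ - a 0) / (a i.succ + b 0) * ((b j.succ - b 0) / (a 0 + b j.succ) *
            (a i.succ + b j.succ)⁻¹) := by
      have := (sum_pos i.succ 0).ne'
      have := (sum_pos 0 0).ne'
      have := (sum_pos 0 j.succ).ne'
      have := (sum_pos i.succ j.succ).ne'
      field_simp
      ring
    have det_scaled := (det_mul_column (fun i : Fin n => (a i.succ - a 0) / (a i.succ + b 0))
      (of fun i j => (b j.succ - b 0) / (a 0 + b j.succ) *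
        (of fun i j : Fin n => (a i.succ + b j.succ)⁻¹) i j))
    rw [det_mul_row] at det_scaled
    rw [det_eq_mul_det_of_pivot _ (inv_pos.2 (sum_pos 0 0)).ne']
    simp only [of_apply, condensed]
    refine mul_pos (inv_pos.2 (sum_pos 0 0)) (det_scaled.symm ▸ mul_pos ?_ (mul_pos ?_ ?_))
    · exact Finset.prod_pos fun i _ => div_pos (sub_pos.2 (ha i.succ_pos)) (sum_pos _ _)
    · exact Finset.prod_pos fun j _ => div_pos (sub_pos.2 (hb j.succ_pos)) (sum_pos _ _)
    · exact ih (ha.comp Fin.strictMono_succ) (hb.comp Fin.strictMono_succ)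
        (fun i => ha_pos i.succ) fun j => hb_pos j.succ

theorem isTPKernelOfOrder_inv_cosh (p : ℕ) {c : ℝ} (hc : 0 < c) :
    IsTPKernelOfOrder p fun x y : ℝ => (Real.cosh (c * (x - y)))⁻¹ := by
  have exp_strictMono : StrictMono fun x => Real.exp (2 * c * x) :=
    Real.exp_strictMono.comp (strictMono_mul_left_of_pos (by positivity))
  have cauchy_exp : IsTPKernelOfOrder p fun x y : ℝ =>
      (Real.exp (2 * c * x) + Real.exp (2 * c * y))⁻¹ := fun n _ x y hx hy =>
    det_cauchy_pos (exp_strictMono.comp hx) (exp_strictMono.comp hy) (fun _ => Real.exp_pos _)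
      fun _ => Real.exp_pos _
  have inv_cosh_eq (x y : ℝ) : (Real.cosh (c * (x - y)))⁻¹ = 2 * Real.exp (c * x) *
      (Real.exp (c * y) * (Real.exp (2 * c * x) + Real.exp (2 * c * y))⁻¹) := by
    have exp_double (t : ℝ) : Real.exp (2 * c * t) = Real.exp (c * t) ^ 2 := by
      rw [← Real.exp_nat_mul]; push_cast; ring_nf
    rw [Real.cosh_eq, neg_mul_eq_mul_neg, neg_sub, mul_sub, mul_sub, Real.exp_sub, Real.exp_sub,
      exp_double, exp_double]
    field_simp
  simp only [inv_cosh_eq]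
  exact cauchy_exp.rescale (fun _ => by positivity) fun _ => Real.exp_pos _

end CauchyKernel

section SechWeights

variable {ι : Type*} [Fintype ι] {N : ℝ}

/-- The partition of unity on `ℝ` proportional to `1 / cosh (N |ι| (x - u a))`, concentrated at
the nodes `u a` close to `x`. The factor `|ι|` makes the total weight of the far nodes `O(1 / N)`
uniformly in the number of nodes. -/
noncomputable def sechWeights (N : ℝ) (u : ι → ℝ) : Matrix ℝ ι ℝ :=
  of fun x a => (∑ b, (Real.cosh (N * Fintype.card ι * (x - u b)))⁻¹)⁻¹ *
    (Real.cosh (N * Fintype.card ι * (x - u a)))⁻¹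

theorem sum_inv_cosh_pos [Nonempty ι] (c : ℝ) (u : ι → ℝ) (x : ℝ) :
    0 < ∑ b, (Real.cosh (c * (x - u b)))⁻¹ :=
  Finset.sum_pos (fun _ _ => inv_pos.2 (Real.cosh_pos _)) Finset.univ_nonempty

theorem sechWeights_mem_stdSimplex [Nonempty ι] (N : ℝ) (u : ι → ℝ) (x : ℝ) :
    sechWeights N u x ∈ stdSimplex ℝ ι := by
  refine ⟨fun a => ?_, ?_⟩
  · exact (mul_pos (inv_pos.2 (sum_inv_cosh_pos _ u x)) (inv_pos.2 (Real.cosh_pos _))).le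
  · simp only [sechWeights, of_apply, ← Finset.mul_sum]
    exact inv_mul_cancel₀ (sum_inv_cosh_pos _ u x).ne'

theorem isTPKernelOfOrder_sechWeights (p : ℕ) [LinearOrder ι] (hN : 0 < N) {u : ι → ℝ}
    (hu : StrictMono u) : IsTPKernelOfOrder p (sechWeights N u) := by
  rcases isEmpty_or_nonempty ι with _ | _
  · rintro (_ | n) - x y - -
    · simp
    · exact isEmptyElim (y 0)
  · have inv_cosh := (isTPKernelOfOrder_inv_cosh p
      (mul_pos hN (Nat.cast_pos.2 (Fintype.card_pos (α := ι))))).comp_strictMono strictMono_id hu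
    simpa only [one_mul] using! inv_cosh.rescale
      (fun x => inv_pos.2 (sum_inv_cosh_pos _ u x)) fun _ => one_pos

theorem cosh_div_cosh_two_mul_le {t : ℝ} (ht : 0 < t) :
    Real.cosh t / Real.cosh (2 * t) ≤ 1 / t := by
  have le_cosh : t ≤ Real.cosh t := (Real.self_le_sinh_iff.2 ht.le).trans (Real.sinh_lt_cosh t).le
  have cosh_sq_le : Real.cosh t ^ 2 ≤ Real.cosh (2 * t) := by
    rw [Real.cosh_two_mul]
    exact le_add_of_nonneg_right (sq_nonneg _)
  rw [div_le_div_iff₀ (Real.cosh_pos _) ht, one_mul]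
  calc Real.cosh t * t ≤ Real.cosh t * Real.cosh t := by gcongr
    _ ≤ Real.cosh (2 * t) := by rwa [← sq]

theorem sechWeights_le_of_far (hN : 0 < N) {u : ι → ℝ} {x η : ℝ} (hη : 0 < η) {a₀ a : ι}
    (near : |x - u a₀| ≤ η) (far : 2 * η ≤ |x - u a|) :
    sechWeights N u x a ≤ 1 / (N * Fintype.card ι * η) := by
  have : Nonempty ι := ⟨a⟩
  set c := N * Fintype.card ι
  have hc : 0 < c := mul_pos hN (Nat.cast_pos.2 Fintype.card_pos)
  have le_normalizer : (Real.cosh (c * η))⁻¹ ≤ ∑ b, (Real.cosh (c * (x - u b)))⁻¹ := by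
    refine le_trans ?_ (Finset.single_le_sum (fun b _ => inv_nonneg.2 (Real.cosh_pos _).le)
      (Finset.mem_univ a₀))
    gcongr
    rw [Real.cosh_le_cosh, abs_mul c (x - u a₀), abs_mul c η, abs_of_pos hη]
    gcongr
  have cosh_far : Real.cosh (2 * (c * η)) ≤ Real.cosh (c * (x - u a)) := by
    rw [Real.cosh_le_cosh, mul_left_comm, abs_mul, abs_mul c, abs_of_pos (mul_pos two_pos hη)]
    gcongr
  calc sechWeights N u x a ≤ Real.cosh (c * η) * (Real.cosh (2 * (c * η)))⁻¹ := by
        rw [sechWeights, of_apply]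
        gcongr
        exact inv_le_of_inv_le₀ (Real.cosh_pos _) le_normalizer
    _ ≤ 1 / (c * η) := cosh_div_cosh_two_mul_le (mul_pos hc hη)

theorem sum_sechWeights_far_le (hN : 0 < N) {u : ι → ℝ} {x η : ℝ} (hη : 0 < η) {a₀ : ι}
    (near : |x - u a₀| ≤ η) :
    ∑ a with 2 * η ≤ |x - u a|, sechWeights N u x a ≤ 1 / (N * η) := by
  have card_pos : (0 : ℝ) < Fintype.card ι := Nat.cast_pos.2 (Fintype.card_pos_iff.2 ⟨a₀⟩)
  calc ∑ a with 2 * η ≤ |x - u a|, sechWeights N u x a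
      ≤ (Finset.univ.filter fun a => 2 * η ≤ |x - u a|).card • (1 / (N * Fintype.card ι * η)) :=
        Finset.sum_le_card_nsmul _ _ _ fun a ha =>
          sechWeights_le_of_far hN hη near (Finset.mem_filter.1 ha).2
    _ ≤ Fintype.card ι * (1 / (N * Fintype.card ι * η)) := by
        rw [nsmul_eq_mul]
        gcongr
        exact Finset.card_le_univ _
    _ = 1 / (N * η) := by field_simp

end SechWeights

section Averages

variable {α β : Type*} [Fintype α] [Fintype β] {w : α → ℝ} {v : β → ℝ} {k : ℝ}

theorem abs_dotProduct_sub_le (hw : w ∈ stdSimplex ℝ α) {f g : α → ℝ}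
    (hfg : ∀ a, |f a - k| ≤ g a) : |w ⬝ᵥ f - k| ≤ w ⬝ᵥ g := by
  have sub_eq : w ⬝ᵥ f - k = ∑ a, w a * (f a - k) := by
    simp only [dotProduct, mul_sub, Finset.sum_sub_distrib, ← Finset.sum_mul, hw.2, one_mul]
  rw [sub_eq]
  refine (Finset.abs_sum_le_sum_abs _ _).trans (Finset.sum_le_sum fun a _ => ?_)
  rw [abs_mul, abs_of_nonneg (hw.1 a)]
  exact mul_le_mul_of_nonneg_left (hfg a) (hw.1 a)

theorem dotProduct_const_add_indicator (hw : w ∈ stdSimplex ℝ α) (A : Finset α) (c C : ℝ) :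
    (w ⬝ᵥ fun a => c + C * (A : Set α).indicator 1 a) = c + C * ∑ a ∈ A, w a := by
  classical
  have sum_indicator : ∑ a, w a * (C * (A : Set α).indicator 1 a) = C * ∑ a ∈ A, w a := by
    simp [Set.indicator_apply, Finset.mul_sum, mul_comm]
  simp only [dotProduct, mul_add, Finset.sum_add_distrib, ← Finset.sum_mul, hw.2, one_mul,
    sum_indicator]

theorem abs_dotProduct_mulVec_sub_le (hw : w ∈ stdSimplex ℝ α) (hv : v ∈ stdSimplex ℝ β)
    {E : Matrix α β ℝ} {ε C : ℝ} (hε : 0 ≤ ε) (hE : ∀ a b, |E a b - k| ≤ C) (A : Finset α)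
    (B : Finset β) (hAB : ∀ a ∉ A, ∀ b ∉ B, |E a b - k| ≤ ε) :
    |w ⬝ᵥ E *ᵥ v - k| ≤ ε + C * (∑ a ∈ A, w a + ∑ b ∈ B, v b) := by
  have entry_bound (a : α) (b : β) : |E a b - k| ≤
      (ε + C * (A : Set α).indicator 1 a) + C * (B : Set β).indicator 1 b := by
    have hC : 0 ≤ C := (abs_nonneg _).trans (hE a b)
    have := hE a b
    classical
    by_cases ha : a ∈ A <;> by_cases hb : b ∈ B <;>
      simp only [Set.indicator_apply, Finset.mem_coe, ha, hb, if_true,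
        if_false, Pi.one_apply, mul_one, mul_zero, add_zero]
    · linarith
    · linarith
    · linarith
    · exact hAB a ha b hb
  have row_bound (a : α) : |(E *ᵥ v) a - k| ≤
      (ε + C * ∑ b ∈ B, v b) + C * (A : Set α).indicator 1 a := by
    rw [mulVec, dotProduct_comm]
    refine (abs_dotProduct_sub_le hv (entry_bound a)).trans_eq ?_
    rw [dotProduct_const_add_indicator hv]
    ring
  refine (abs_dotProduct_sub_le hw row_bound).trans_eq ?_
  rw [dotProduct_const_add_indicator hw]
  ring

end Averages

section Approximation

variable {α β : Type*} [Fintype α] [Fintype β]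

/-- The nodes `f` on `α`, followed by `p` further nodes at distance at least `1` from them; these
carry the identity block of `padOne`. -/
def paddedNodes (p : ℕ) (f : α → ℝ) (c : α ⊕ₗ Fin p) : ℝ :=
  Sum.elim f (fun i : Fin p => 1 + (i : ℝ) + ∑ a, |f a|) (ofLex c)

theorem add_one_le_paddedNodes_inr {p : ℕ} (f : α → ℝ) (a : α) (i : Fin p) :
    f a + 1 ≤ paddedNodes p f (Sum.inrₗ i) := by
  have le_sum : f a ≤ ∑ a, |f a| := (le_abs_self _).trans
    (Finset.single_le_sum (f := fun a => |f a|) (fun _ _ => abs_nonneg _) (Finset.mem_univ a))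
  have : (0 : ℝ) ≤ i := Nat.cast_nonneg _
  change f a + 1 ≤ 1 + i + ∑ a, |f a|
  linarith

theorem paddedNodes_strictMono [Preorder α] (p : ℕ) {f : α → ℝ} (hf : StrictMono f) :
    StrictMono (paddedNodes p f) := by
  rintro (a | i) (b | j) hab
  · exact hf (Sum.Lex.inl_lt_inl_iff.1 hab)
  · exact (lt_add_one _).trans_le (add_one_le_paddedNodes_inr f a j)
  · exact absurd hab Sum.Lex.not_inr_lt_inl
  · have hij : i < j := Sum.Lex.inr_lt_inr_iff.1 hab
    exact add_lt_add_left (add_lt_add_right (Nat.cast_lt.2 hij) 1) _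

theorem exists_eq_inl_of_abs_sub_paddedNodes_lt {p : ℕ} {f : α → ℝ} {x η : ℝ} (hη : η ≤ 1 / 3)
    {a₀ : α} (near : |x - f a₀| ≤ η) {a : α ⊕ₗ Fin p} (ha : |x - paddedNodes p f a| < 2 * η) :
    ∃ s, a = Sum.inlₗ s ∧ |x - f s| < 2 * η := by
  rcases a with s | i
  · exact ⟨s, rfl, ha⟩
  · exfalso
    have spaced := add_one_le_paddedNodes_inr f a₀ i
    have x_le := (abs_le.1 near).2
    have lt_x : -(2 * η) < x - paddedNodes p f (Sum.inrₗ i) := (abs_lt.1 ha).1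
    linarith

/-- The kernel on `ℝ × ℝ` obtained by smoothing `A ⊕ 1`, placed at the nodes `f` and `g` and `p`
distant further ones, with `sechWeights` in each variable. The scale grows with the entries
of `A`, so that the far nodes contribute `O(1 / r)` whatever the size of these entries. -/
noncomputable def tpApprox (r : ℝ) (p : ℕ) (f : α → ℝ) (g : β → ℝ) (A : Matrix α β ℝ) :
    Matrix ℝ ℝ ℝ :=
  sechWeights (r * (1 + ∑ a, ∑ b, |A a b|)) (paddedNodes p f) * padOne (Fin p) A *
    (sechWeights (r * (1 + ∑ a, ∑ b, |A a b|)) (paddedNodes p g))ᵀ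

theorem tpApprox_apply (r : ℝ) (p : ℕ) (f : α → ℝ) (g : β → ℝ) (A : Matrix α β ℝ) (x y : ℝ) :
    tpApprox r p f g A x y =
      sechWeights (r * (1 + ∑ a, ∑ b, |A a b|)) (paddedNodes p f) x ⬝ᵥ
        padOne (Fin p) A *ᵥ sechWeights (r * (1 + ∑ a, ∑ b, |A a b|)) (paddedNodes p g) y := by
  rw [tpApprox, Matrix.mul_assoc]
  rfl

theorem tpApprox_comm (r : ℝ) (p : ℕ) (f : α → ℝ) {A : Matrix α α ℝ} (hA : A.IsSymm) (x y : ℝ) :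
    tpApprox r p f f A x y = tpApprox r p f f A y x := by
  have isSymm : (tpApprox r p f f A)ᵀ = tpApprox r p f f A := by
    rw [tpApprox, transpose_mul, transpose_mul, transpose_transpose, transpose_padOne, hA.eq,
      Matrix.mul_assoc]
  exact congrFun₂ isSymm y x

theorem one_add_sum_abs_pos (A : Matrix α β ℝ) : 0 < 1 + ∑ a, ∑ b, |A a b| :=
  add_pos_of_pos_of_nonneg one_pos
    (Finset.sum_nonneg fun _ _ => Finset.sum_nonneg fun _ _ => abs_nonneg _)

theorem isTPKernelOfOrder_tpApprox [LinearOrder α] [LinearOrder β] {r : ℝ} (hr : 0 < r) {p : ℕ}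
    {f : α → ℝ} {g : β → ℝ} {A : Matrix α β ℝ} (hf : StrictMono f) (hg : StrictMono g)
    (hA : IsTNKernelOfOrder p A) : IsTPKernelOfOrder p (tpApprox r p f g A) :=
  have scale_pos := mul_pos hr (one_add_sum_abs_pos A)
  (isTPKernelOfOrder_sechWeights p scale_pos (paddedNodes_strictMono p hf)).mul_isTN_mul
    (isTNKernelOfOrder_padOne hA)
    (isTPKernelOfOrder_sechWeights p scale_pos (paddedNodes_strictMono p hg)).flip
    fun _ hn => exists_padOne_minor_pos A hn

theorem isTPKernelOfOrder_tpApprox_grid {X Y : Set ℝ} {K : X → Y → ℝ} {p : ℕ}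
    (hK : IsTNKernelOfOrder p K) {r : ℝ} (hr : 0 < r) (S : Finset X) (T : Finset Y) :
    IsTPKernelOfOrder p fun (x : X) (y : Y) => tpApprox r p (fun s : S => (s : ℝ))
      (fun t : T => (t : ℝ)) (fun s t => K s t) x y :=
  have coe_strictMono {Z : Set ℝ} (S : Finset Z) : StrictMono fun s : S => (s : ℝ) :=
    fun _ _ h => h
  (isTPKernelOfOrder_tpApprox hr (coe_strictMono S) (coe_strictMono T)
    (hK.comp_strictMono (Subtype.strictMono_coe _) (Subtype.strictMono_coe _))).comp_strictMono
    (Subtype.strictMono_coe _) (Subtype.strictMono_coe _)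

theorem abs_padOne_sub_le {γ : Type*} [DecidableEq γ] (A : Matrix α β ℝ) (k : ℝ) (a : α ⊕ₗ γ)
    (b : β ⊕ₗ γ) : |padOne γ A a b - k| ≤ (1 + ∑ a, ∑ b, |A a b|) * (1 + |k|) := by
  have entry_le (a : α) (b : β) : |A a b| ≤ ∑ a, ∑ b, |A a b| :=
    (Finset.single_le_sum (f := fun b => |A a b|) (fun _ _ => abs_nonneg _)
      (Finset.mem_univ b)).trans
      (Finset.single_le_sum (f := fun a => ∑ b, |A a b|)
        (fun _ _ => Finset.sum_nonneg fun _ _ => abs_nonneg _) (Finset.mem_univ a))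
  have sum_nonneg : 0 ≤ ∑ a, ∑ b, |A a b| :=
    Finset.sum_nonneg fun _ _ => Finset.sum_nonneg fun _ _ => abs_nonneg _
  calc |padOne γ A a b - k| ≤ |padOne γ A a b| + |k| := abs_sub _ _
    _ ≤ (1 + ∑ a, ∑ b, |A a b|) + |k| := by
        gcongr
        exact abs_padOne_le (fun a b => (entry_le a b).trans (le_add_of_nonneg_left zero_le_one))
          (le_add_of_nonneg_right sum_nonneg) a b
    _ ≤ (1 + ∑ a, ∑ b, |A a b|) * (1 + |k|) := by
        nlinarith [mul_nonneg sum_nonneg (abs_nonneg k)]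

theorem abs_tpApprox_sub_le {r : ℝ} (hr : 0 < r) (p : ℕ) {f : α → ℝ} {g : β → ℝ}
    {A : Matrix α β ℝ} {k ε η x y : ℝ} (hε : 0 ≤ ε) (hη : 0 < η) (hη_le : η ≤ 1 / 3) {a₀ : α}
    {b₀ : β} (near_x : |x - f a₀| ≤ η) (near_y : |y - g b₀| ≤ η)
    (close : ∀ a b, |x - f a| < 2 * η → |y - g b| < 2 * η → |A a b - k| ≤ ε) :
    |tpApprox r p f g A x y - k| ≤ ε + 2 * (1 + |k|) / (r * η) := by
  have : Nonempty (α ⊕ₗ Fin p) := ⟨Sum.inlₗ a₀⟩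
  have : Nonempty (β ⊕ₗ Fin p) := ⟨Sum.inlₗ b₀⟩
  set M := 1 + ∑ a, ∑ b, |A a b| with hM
  have M_pos : 0 < M := one_add_sum_abs_pos A
  have scale_pos : 0 < r * M := mul_pos hr M_pos
  have close_padded (a : α ⊕ₗ Fin p) (ha : ¬2 * η ≤ |x - paddedNodes p f a|) (b : β ⊕ₗ Fin p)
      (hb : ¬2 * η ≤ |y - paddedNodes p g b|) : |padOne (Fin p) A a b - k| ≤ ε := by
    obtain ⟨s, rfl, hs⟩ := exists_eq_inl_of_abs_sub_paddedNodes_lt hη_le near_x (not_le.1 ha)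
    obtain ⟨t, rfl, ht⟩ := exists_eq_inl_of_abs_sub_paddedNodes_lt hη_le near_y (not_le.1 hb)
    exact close s t hs ht
  rw [tpApprox_apply, ← hM]
  calc _ ≤ ε + M * (1 + |k|) *
        (∑ a with 2 * η ≤ |x - paddedNodes p f a|, sechWeights (r * M) (paddedNodes p f) x a +
          ∑ b with 2 * η ≤ |y - paddedNodes p g b|, sechWeights (r * M) (paddedNodes p g) y b) :=
        abs_dotProduct_mulVec_sub_le (sechWeights_mem_stdSimplex _ _ x)
          (sechWeights_mem_stdSimplex _ _ y) hε (abs_padOne_sub_le A k) _ _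
          fun a ha b hb => close_padded a (by simpa using ha) b (by simpa using hb)
    _ ≤ ε + M * (1 + |k|) * (1 / (r * M * η) + 1 / (r * M * η)) := by
        gcongr
        · exact sum_sechWeights_far_le scale_pos hη (a₀ := Sum.inlₗ a₀) near_x
        · exact sum_sechWeights_far_le scale_pos hη (a₀ := Sum.inlₗ b₀) near_y
    _ = ε + 2 * (1 + |k|) / (r * η) := by
        field_simp
        ring

end Approximation

section Convergence

theorem exists_finset_seq_eventually_meets_nhds (X : Type*) [TopologicalSpace X]
    [TopologicalSpace.SeparableSpace X] :
    ∃ S : ℕ → Finset X, ∀ x, ∀ U ∈ 𝓝 x, ∀ᶠ l in atTop, ∃ s ∈ S l, s ∈ U := by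
  classical
  rcases isEmpty_or_nonempty X with _ | _
  · exact ⟨fun _ => ∅, fun x => isEmptyElim x⟩
  refine ⟨fun l => (Finset.range l).image (TopologicalSpace.denseSeq X), fun x U hU => ?_⟩
  obtain ⟨_, ⟨n, rfl⟩, hsU⟩ := (TopologicalSpace.denseRange_denseSeq X).inter_nhds_nonempty hU
  filter_upwards [eventually_gt_atTop n] with l hl
  exact ⟨_, Finset.mem_image_of_mem _ (Finset.mem_range.2 hl), hsU⟩

theorem tendstoLocallyUniformlyOn_of_tendsto_prod_nhds {ι Z E : Type*} [TopologicalSpace Z]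
    [UniformSpace E] {F : ι → Z → E} {f : Z → E} {φ : Filter ι} {s : Set Z}
    (hf : ∀ z ∈ s, ContinuousAt f z)
    (hF : ∀ z ∈ s, Tendsto (fun q : ι × Z => F q.1 q.2) (φ ×ˢ 𝓝 z) (𝓝 (f z))) :
    TendstoLocallyUniformlyOn F f φ s := by
  rw [tendstoLocallyUniformlyOn_iff_forall_tendsto]
  intro z hz
  have tendsto_pair : Tendsto (fun q : ι × Z => (f q.2, F q.1 q.2)) (φ ×ˢ 𝓝 z) (𝓝 (f z, f z)) :=
    ((hf z hz).tendsto.comp tendsto_snd).prodMk_nhds (hF z hz)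
  exact (tendsto_pair.mono_left (prod_mono_right φ nhdsWithin_le_nhds)).mono_right
    (nhds_le_uniformity (f z))

variable {X Y : Set ℝ} {S : ℕ → Finset X} {T : ℕ → Finset Y}

theorem tendsto_tpApprox_of_continuousAt (p : ℕ)
    (hS : ∀ x, ∀ U ∈ 𝓝 x, ∀ᶠ l in atTop, ∃ s ∈ S l, s ∈ U)
    (hT : ∀ y, ∀ U ∈ 𝓝 y, ∀ᶠ l in atTop, ∃ t ∈ T l, t ∈ U) {K : X → Y → ℝ} {q : X × Y}
    (hK : ContinuousAt (fun z : X × Y => K z.1 z.2) q) :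
    Tendsto (fun z : ℕ × X × Y => tpApprox (z.1 + 1) p (fun s : S z.1 => (s : ℝ))
      (fun t : T z.1 => (t : ℝ)) (fun s t => K s t) z.2.1 z.2.2) (atTop ×ˢ 𝓝 q)
      (𝓝 (K q.1 q.2)) := by
  rw [Metric.tendsto_nhds]
  intro ε hε
  obtain ⟨δ, hδ, hKδ⟩ := Metric.continuousAt_iff.1 hK (ε / 2) (half_pos hε)
  obtain ⟨η, hη, hη_lt⟩ : ∃ η, 0 < η ∧ η < min (δ / 3) (1 / 3) := exists_between (by positivity)
  obtain ⟨hηδ, hη_le⟩ := lt_min_iff.1 hη_lt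
  have tail_small : ∀ᶠ l : ℕ in atTop, 2 * (1 + |K q.1 q.2|) / ((l + 1) * η) < ε / 2 := by
    have tendsto_scale : Tendsto (fun l : ℕ => ((l : ℝ) + 1) * η) atTop atTop :=
      (tendsto_natCast_atTop_atTop.atTop_add tendsto_const_nhds).atTop_mul_const hη
    exact (tendsto_scale.const_div_atTop _).eventually_lt_const (half_pos hε)
  filter_upwards [(tail_small.and ((hS q.1 _ (Metric.ball_mem_nhds _ (half_pos hη))).and
    (hT q.2 _ (Metric.ball_mem_nhds _ (half_pos hη))))).prod_mk
    (Metric.ball_mem_nhds q (half_pos hη))]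
  rintro ⟨l, x, y⟩ ⟨⟨tail_lt, ⟨s₀, hs₀, s₀_near⟩, t₀, ht₀, t₀_near⟩, hxy⟩
  obtain ⟨x_near, y_near⟩ := max_lt_iff.1 (Metric.mem_ball.1 hxy)
  have near {Z : Set ℝ} {z c s : Z} (hz : dist z c < η / 2) (hs : dist s c < η / 2) :
      |(z : ℝ) - s| ≤ η := by
    have := dist_triangle_right z s c
    exact (Subtype.dist_eq z s).symm.trans_le (by linarith)
  have dist_lt {Z : Set ℝ} {z c s : Z} (hz : dist z c < η / 2) (hs : |(z : ℝ) - s| < 2 * η) :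
      dist s c < δ := by
    have := dist_triangle_left s c z
    have : dist z s < 2 * η := hs
    linarith
  have close (s : S l) (t : T l) (hs : |(x : ℝ) - s| < 2 * η) (ht : |(y : ℝ) - t| < 2 * η) :
      |K s t - K q.1 q.2| ≤ ε / 2 :=
    (hKδ (x := (↑s, ↑t)) (max_lt (dist_lt x_near hs) (dist_lt y_near ht))).le
  calc _ ≤ ε / 2 + 2 * (1 + |K q.1 q.2|) / ((l + 1) * η) :=
        abs_tpApprox_sub_le (by positivity) p (half_pos hε).le hη hη_le.le
          (a₀ := (⟨s₀, hs₀⟩ : S l)) (b₀ := (⟨t₀, ht₀⟩ : T l)) (near x_near s₀_near)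
          (near y_near t₀_near) close
    _ < ε := by linarith

theorem tendstoLocallyUniformlyOn_tpApprox (p : ℕ)
    (hS : ∀ x, ∀ U ∈ 𝓝 x, ∀ᶠ l in atTop, ∃ s ∈ S l, s ∈ U)
    (hT : ∀ y, ∀ U ∈ 𝓝 y, ∀ᶠ l in atTop, ∃ t ∈ T l, t ∈ U) (K : X → Y → ℝ) :
    TendstoLocallyUniformlyOn
      (fun (l : ℕ) (q : X × Y) => tpApprox (l + 1) p (fun s : S l => (s : ℝ))
        (fun t : T l => (t : ℝ)) (fun s t => K s t) q.1 q.2)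
      (fun q : X × Y => K q.1 q.2) atTop {q | ContinuousAt (fun r : X × Y => K r.1 r.2) q} :=
  tendstoLocallyUniformlyOn_of_tendsto_prod_nhds (fun _ hq => hq)
    fun _ hq => tendsto_tpApprox_of_continuousAt p hS hT hq

end Convergence

theorem stmt_6_general (p : ℕ) :
    (∀ (X Y : Set ℝ) (K : X → Y → ℝ), IsTNKernelOfOrder p K →
      ∃ Kl : ℕ → X → Y → ℝ, (∀ l, IsTPKernelOfOrder p (Kl l)) ∧
        TendstoLocallyUniformlyOn (fun l (q : X × Y) => Kl l q.1 q.2)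
          (fun q : X × Y => K q.1 q.2) atTop
          {q | ContinuousAt (fun r : X × Y => K r.1 r.2) q}) ∧
    (∀ (X : Set ℝ) (K : X → X → ℝ), (∀ a b, K a b = K b a) → IsTNKernelOfOrder p K →
      ∃ Kl : ℕ → X → X → ℝ, (∀ l, (∀ a b, Kl l a b = Kl l b a) ∧ IsTPKernelOfOrder p (Kl l)) ∧
        TendstoLocallyUniformlyOn (fun l (q : X × X) => Kl l q.1 q.2)
          (fun q : X × X => K q.1 q.2) atTop
          {q | ContinuousAt (fun r : X × X => K r.1 r.2) q}) := by
  constructor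
  · intro X Y K hK
    obtain ⟨S, hS⟩ := exists_finset_seq_eventually_meets_nhds X
    obtain ⟨T, hT⟩ := exists_finset_seq_eventually_meets_nhds Y
    exact ⟨_, fun l => isTPKernelOfOrder_tpApprox_grid hK (Nat.cast_add_one_pos l) (S l) (T l),
      tendstoLocallyUniformlyOn_tpApprox p hS hT K⟩
  · intro X K hK_symm hK
    obtain ⟨S, hS⟩ := exists_finset_seq_eventually_meets_nhds X
    refine ⟨_, fun l => ⟨fun x y => ?_, isTPKernelOfOrder_tpApprox_grid hK
      (Nat.cast_add_one_pos l) (S l) (S l)⟩, tendstoLocallyUniformlyOn_tpApprox p hS hS K⟩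
    exact tpApprox_comm (l + 1) p _ (Matrix.ext fun _ _ => hK_symm _ _) x y

theorem stmt_6 :
    (∀ (X Y : Set ℝ), X.Nonempty → Y.Nonempty → ∀ p : ℕ, 0 < p →
      ∀ K : X → Y → ℝ, IsTNKernelOfOrder p K → (∃ M : ℝ, ∀ a b, |K a b| ≤ M) →
      ∃ Kl : ℕ → X → Y → ℝ, (∀ l, IsTPKernelOfOrder p (Kl l)) ∧
        TendstoLocallyUniformlyOn (fun l (q : X × Y) => Kl l q.1 q.2)
          (fun q : X × Y => K q.1 q.2) Filter.atTop
          {q : X × Y | ((q.1 : ℝ), (q.2 : ℝ)) ∈ interior (X ×ˢ Y) ∧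
            ContinuousAt (fun r : X × Y => K r.1 r.2) q}) ∧
    (∀ X : Set ℝ, X.Nonempty → ∀ p : ℕ, 0 < p →
      ∀ K : X → X → ℝ, (∀ a b, K a b = K b a) → IsTNKernelOfOrder p K →
      (∃ M : ℝ, ∀ a b, |K a b| ≤ M) →
      ∃ Kl : ℕ → X → X → ℝ,
        (∀ l, (∀ a b, Kl l a b = Kl l b a) ∧ IsTPKernelOfOrder p (Kl l)) ∧
        TendstoLocallyUniformlyOn (fun l (q : X × X) => Kl l q.1 q.2)
          (fun q : X × X => K q.1 q.2) Filter.atTop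
          {q : X × X | ((q.1 : ℝ), (q.2 : ℝ)) ∈ interior (X ×ˢ X) ∧
            ContinuousAt (fun r : X × X => K r.1 r.2) q}) := by
  refine ⟨fun X Y _ _ p _ K hK _ => ?_, fun X _ p _ K hK_symm hK _ => ?_⟩
  · exact ((stmt_6_general p).1 X Y K hK).imp fun _ => .imp_right (·.mono fun _ hq => hq.2)
  · exact ((stmt_6_general p).2 X K hK_symm hK).imp fun _ => .imp_right (·.mono fun _ hq => hq.2)
end

section
/- Let F : (0,∞) → ℝ and let d be a positive integer. Then F[A] is totally positive for every symmetric totally positive d × d matrix A if and only if: (a) d = 1: F(x) > 0 for all x > 0; (b) d = 2: F is positive, strictly increasing, and multiplicatively mid-convex, i.e., F(√(xy))² ≤ F(x)F(y) for all x, y ∈ (0,∞); (c) d = 3: F(x) = c·x^α for some c > 0 and some α ≥ 1; (d) d = 4: F(x) = c·x^α for some c > 0 and some α ∈ {1} ∪ [2,∞); (e) d ≥ 5: F(x) = c·x for some c > 0. -/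
/-- An `m × n` real matrix is totally positive if all of its minors are positive. -/
def IsTPMat {m n : ℕ} (A : Matrix (Fin m) (Fin n) ℝ) : Prop :=
  ∀ (k : ℕ) (r : Fin k → Fin m) (c : Fin k → Fin n),
    StrictMono r → StrictMono c → 0 < (A.submatrix r c).det

/-!
Bordering a totally positive matrix by a row and a column of increasing powers of a small parameter
keeps it totally positive, so a function preserving symmetric total positivity in dimension `d + 1`
does so in dimension `d`. In dimension 2, preservation makes `F ∘ exp` monotone and bounded by the
geometric mean of its neighbours, hence `F` continuous, and the minors of `F[B]` are then
nonnegative for every positive `B` in the closure of the symmetric totally positive matrices. This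
closure contains `L * diagonal w * Lᵀ` for every `w ≥ 0` and every product `L` of nonnegative
elementary bidiagonal matrices. The rank-one matrices among these give, in dimension 3,
`F p * F q = F s * F t` whenever `p * q = s * t`, so that `F x = c * x ^ α`. Low-rank Gram matrices
then restrict `α`: a determinant is negative in dimension 3 for `α < 1`, in dimension 4 for
`1 < α < 2` (as a vector of the Gram matrix tends to another), and in dimension 5 for `α > 1`
(expanding to second order around the all-ones matrix).

Conversely, let `A` be totally positive and `α ≥ 1`. For a `3 × 3` matrix whose first row and column
are scaled to `1`, the determinant is positive when `(b - 1) * (c - 1) < (a - 1) * (d - 1)`, and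
this inequality passes to `α`-th powers because `((1 + ρ * u) ^ α - 1) / ((1 + u) ^ α - 1)` is
nondecreasing in `u` for `ρ ≥ 1`. For `4 × 4`, a symmetric totally positive matrix is positive
definite, and so is its entrywise power when `α > n - 2` (FitzGerald and Horn): the derivative of
the quadratic form along the segment from the rank-one pivot part of `A` to `A` is that of a Schur
product of positive definite matrices, by induction on `n`. The remaining exponent `α = 2` is the
Schur product theorem itself.
-/

section SymmetricTotalPositivity

open Matrix Filter Topology

section TotallyPositive

variable {m n m' n' : ℕ} {A : Matrix (Fin m) (Fin n) ℝ}

namespace IsTPMat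

theorem pos (hA : IsTPMat A) (i : Fin m) (j : Fin n) : 0 < A i j := by
  simpa using hA 1 (fun _ ↦ i) (fun _ ↦ j) (Subsingleton.strictMono _) (Subsingleton.strictMono _)

theorem det_pos {A : Matrix (Fin n) (Fin n) ℝ} (hA : IsTPMat A) : 0 < A.det := by
  simpa using hA n id id strictMono_id strictMono_id

theorem submatrix (hA : IsTPMat A) {r : Fin m' → Fin m} {c : Fin n' → Fin n}
    (hr : StrictMono r) (hc : StrictMono c) : IsTPMat (A.submatrix r c) := fun k r' c' hr' hc' ↦
  hA k (r ∘ r') (c ∘ c') (hr.comp hr') (hc.comp hc')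

theorem transpose (hA : IsTPMat A) : IsTPMat Aᵀ := fun k r c hr hc ↦ by
  rw [← transpose_submatrix, det_transpose]
  exact hA k c r hc hr

theorem diagonal_mul (hA : IsTPMat A) {x : Fin m → ℝ} (hx : ∀ i, 0 < x i) :
    IsTPMat (diagonal x * A) := fun k r c hr hc ↦ by
  have h : (diagonal x * A).submatrix r c = of fun i j ↦ x (r i) * A.submatrix r c i j := by
    ext; simp
  rw [h, det_mul_column]
  exact mul_pos (Finset.prod_pos fun i _ ↦ hx _) (hA k r c hr hc)

theorem mul_diagonal (hA : IsTPMat A) {x : Fin n → ℝ} (hx : ∀ i, 0 < x i) :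
    IsTPMat (A * diagonal x) := by
  simpa using (hA.transpose.diagonal_mul hx).transpose

end IsTPMat

theorem isTPMat_map_congr {F G : ℝ → ℝ} (hA : IsTPMat A) (hFG : ∀ x, 0 < x → F x = G x) :
    A.map F = A.map G := by
  ext i j
  exact hFG _ (hA.pos i j)

theorem strictMono_update_of_covBy {k : ℕ} {c : Fin k → Fin n} (hc : StrictMono c) {p : Fin k}
    {j : Fin n} (hj : j ⋖ c p) (hne : ∀ q, c q ≠ j) : StrictMono (Function.update c p j) := by
  intro a b hab
  rcases eq_or_ne a p with rfl | ha
  · rw [Function.update_self, Function.update_of_ne hab.ne']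
    exact hj.lt.trans (hc hab)
  rcases eq_or_ne b p with rfl | hb
  · rw [Function.update_self, Function.update_of_ne ha]
    exact (hj.le_of_lt (hc hab)).lt_of_ne (hne a)
  · simpa [ha, hb] using hc hab

namespace IsTPMat

theorem det_submatrix_update_nonneg (hA : IsTPMat A) {k : ℕ} {r : Fin k → Fin m}
    {c : Fin k → Fin n} (hr : StrictMono r) (hc : StrictMono c) {p : Fin k} {j : Fin n}
    (hj : j ⋖ c p) : 0 ≤ (A.submatrix r (Function.update c p j)).det := by
  by_cases hne : ∀ q, c q ≠ j
  · exact (hA k r _ hr (strictMono_update_of_covBy hc hj hne)).le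
  push Not at hne
  obtain ⟨q, rfl⟩ := hne
  have hqp : q ≠ p := by
    rintro rfl
    exact hj.lt.false
  rw [det_zero_of_column_eq hqp fun i ↦ by simp [hqp]]

theorem updateCol_add_smul (hA : IsTPMat A) {t : ℝ} (ht : 0 ≤ t) {j j' : Fin n} (hj : j ⋖ j') :
    IsTPMat (A.updateCol j' (A.col j' + t • A.col j)) := by
  intro k r c hr hc
  by_cases hp : ∃ p, c p = j'
  · obtain ⟨p, rfl⟩ := hp
    have hsub (v : Fin m → ℝ) :
        (A.updateCol (c p) v).submatrix r c = (A.submatrix r c).updateCol p (v ∘ r) := by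
      ext a b
      simp [updateCol_apply, hc.injective.eq_iff]
    have hcol (q : Fin n) : (A.submatrix r c).updateCol p (A.col q ∘ r) =
        A.submatrix r (Function.update c p q) := by
      ext a b
      rcases eq_or_ne b p with rfl | hb <;> simp [*]
    have hdet : ((A.updateCol (c p) (A.col (c p) + t • A.col j)).submatrix r c).det =
        (A.submatrix r c).det + t * (A.submatrix r (Function.update c p j)).det := by
      rw [hsub, show (A.col (c p) + t • A.col j) ∘ r = A.col (c p) ∘ r + t • (A.col j ∘ r) from rfl,
        det_updateCol_add, det_updateCol_smul, hcol, hcol, Function.update_eq_self]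
    rw [hdet]
    exact add_pos_of_pos_of_nonneg (hA k r c hr hc)
      (mul_nonneg ht (hA.det_submatrix_update_nonneg hr hc hj))
  · push Not at hp
    convert hA k r c hr hc using 2
    ext a b
    simp [hp b]

theorem mul_transpose_transvection (hA : IsTPMat A) {t : ℝ} (ht : 0 ≤ t) {j j' : Fin n}
    (hj : j ⋖ j') : IsTPMat (A * (transvection j' j t)ᵀ) := by
  have h : A * (transvection j' j t)ᵀ = A.updateCol j' (A.col j' + t • A.col j) := by
    rw [← transpose_transpose (A * _), transpose_mul, transpose_transpose]
    ext a b
    rcases eq_or_ne b j' with rfl | hb <;> simp [*]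
  rw [h]
  exact hA.updateCol_add_smul ht hj

theorem transvection_mul (hA : IsTPMat A) {t : ℝ} (ht : 0 ≤ t) {j j' : Fin m}
    (hj : j ⋖ j') : IsTPMat (transvection j' j t * A) := by
  simpa using (hA.transpose.mul_transpose_transvection ht hj).transpose

end IsTPMat

theorem eventually_isTPMat {ι : Type*} {l : Filter ι} {M : ι → Matrix (Fin m) (Fin n) ℝ}
    (h : ∀ k (r : Fin k → Fin m) (c : Fin k → Fin n), StrictMono r → StrictMono c →
      ∀ᶠ u in l, 0 < ((M u).submatrix r c).det) : ∀ᶠ u in l, IsTPMat (M u) := by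
  have hfin : ∀ᶠ u in l, ∀ (k : Fin (m + 1)) (r : Fin k → Fin m) (c : Fin k → Fin n),
      StrictMono r → StrictMono c → 0 < ((M u).submatrix r c).det := by
    simp only [eventually_all]
    exact fun k ↦ h k
  filter_upwards [hfin] with u hu k r c hr hc
  have hk : k ≤ m := by simpa using Fintype.card_le_of_injective r hr.injective
  exact hu ⟨k, Nat.lt_succ_of_le hk⟩ r c hr hc

/-- The matrix `A` with the column `v`, the row `w` and the corner entry `1` added in front. -/
def border (A : Matrix (Fin m) (Fin n) ℝ) (v : Fin m → ℝ) (w : Fin n → ℝ) :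
    Matrix (Fin (m + 1)) (Fin (n + 1)) ℝ :=
  of (vecCons (vecCons 1 w) fun i ↦ vecCons (v i) (A i))

section border

variable (A) (v : Fin m → ℝ) (w : Fin n → ℝ)

@[simp] theorem border_zero_zero : border A v w 0 0 = 1 := rfl

@[simp] theorem border_zero_succ (j : Fin n) : border A v w 0 j.succ = w j := rfl

@[simp] theorem border_succ_zero (i : Fin m) : border A v w i.succ 0 = v i := rfl

@[simp] theorem border_succ_succ (i : Fin m) (j : Fin n) :
    border A v w i.succ j.succ = A i j := rfl

theorem border_transpose : (border A v w)ᵀ = border Aᵀ w v := by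
  ext i j
  cases i using Fin.cases <;> cases j using Fin.cases <;> rfl

@[simp] theorem border_submatrix_succ : (border A v w).submatrix Fin.succ Fin.succ = A := rfl

theorem border_one_zero : border (1 : Matrix (Fin n) (Fin n) ℝ) 0 0 = 1 := by
  ext i j
  cases i using Fin.cases <;> cases j using Fin.cases <;>
    simp [one_apply, Fin.succ_ne_zero, eq_comm]

theorem border_submatrix_cons (r : Fin m' → Fin m) (c : Fin n' → Fin n) :
    (border A v w).submatrix (vecCons 0 (Fin.succ ∘ r)) (vecCons 0 (Fin.succ ∘ c)) =
      border (A.submatrix r c) (v ∘ r) (w ∘ c) := by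
  ext i j
  cases i using Fin.cases <;> cases j using Fin.cases <;> rfl

theorem det_border_zero (B : Matrix (Fin n) (Fin n) ℝ) (w : Fin n → ℝ) :
    (border B 0 w).det = B.det := by
  rw [det_succ_column_zero, Fin.sum_univ_succ]
  simp

end border

theorem continuous_border_pow (A : Matrix (Fin m) (Fin n) ℝ) (e : Fin m → ℕ) (f : Fin n → ℕ) :
    Continuous fun u : ℝ ↦ border A (fun i ↦ u ^ e i) fun j ↦ u ^ f j := by
  refine continuous_matrix fun i j ↦ ?_
  cases i using Fin.cases <;> cases j using Fin.cases <;> simp only [border_zero_zero,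
    border_zero_succ, border_succ_zero, border_succ_succ] <;> fun_prop

theorem strictMono_fin_succ_cases {k : ℕ} {r : Fin (k + 1) → Fin (m + 1)} (hr : StrictMono r) :
    (∃ r' : Fin (k + 1) → Fin m, StrictMono r' ∧ r = Fin.succ ∘ r') ∨
      ∃ r' : Fin k → Fin m, StrictMono r' ∧ r = vecCons 0 (Fin.succ ∘ r') := by
  have hne (i : Fin k) : r i.succ ≠ 0 := ((Fin.zero_le _).trans_lt (hr i.succ_pos)).ne'
  by_cases h0 : r 0 = 0
  · refine .inr ⟨fun i ↦ (r i.succ).pred (hne i), fun i j hij ↦ ?_, ?_⟩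
    · exact Fin.pred_lt_pred_iff.mpr (hr (Fin.succ_lt_succ_iff.mpr hij))
    · ext i
      cases i using Fin.cases <;> simp [h0]
  · have hne' (i : Fin (k + 1)) : r i ≠ 0 := by cases i using Fin.cases <;> simp [h0, hne]
    refine .inl ⟨fun i ↦ (r i).pred (hne' i), fun i j hij ↦ ?_, ?_⟩
    · exact Fin.pred_lt_pred_iff.mpr (hr hij)
    · ext i
      simp

theorem eventually_sum_pow_mul_pos {k : ℕ} {e : Fin (k + 1) → ℕ} (he : StrictMono e)
    {D : Fin (k + 1) → ℝ} (hD : 0 < D 0) : ∀ᶠ u : ℝ in 𝓝[>] 0, 0 < ∑ i, u ^ e i * D i := by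
  have hlim : Tendsto (fun u : ℝ ↦ ∑ i, u ^ (e i - e 0) * D i) (𝓝[>] 0) (𝓝 (D 0)) := by
    have hval : ∑ i, (0 : ℝ) ^ (e i - e 0) * D i = D 0 := by
      rw [Fin.sum_univ_succ]
      simp [Nat.sub_eq_zero_iff_le, (he (Fin.succ_pos _))]
    have hcont : Continuous fun u : ℝ ↦ ∑ i, u ^ (e i - e 0) * D i := by fun_prop
    exact tendsto_nhdsWithin_of_tendsto_nhds (hval ▸ hcont.tendsto 0)
  filter_upwards [hlim.eventually_const_lt hD, self_mem_nhdsWithin] with u hu (hu0 : 0 < u)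
  have hfactor : ∑ i, u ^ e i * D i = u ^ e 0 * ∑ i, u ^ (e i - e 0) * D i := by
    rw [Finset.mul_sum]
    refine Finset.sum_congr rfl fun i _ ↦ ?_
    rw [← mul_assoc, ← pow_add, Nat.add_sub_cancel' (he.monotone (Fin.zero_le i))]
  rw [hfactor]
  positivity

namespace IsTPMat

theorem eventually_det_border_submatrix_succ_cons_pos (hA : IsTPMat A) (w : ℝ → Fin n → ℝ) {k : ℕ}
    {r : Fin (k + 1) → Fin m} {c : Fin k → Fin n} (hr : StrictMono r) (hc : StrictMono c) :
    ∀ᶠ u : ℝ in 𝓝[>] 0, 0 < ((border A (fun i ↦ u ^ (i + 1 : ℕ)) (w u)).submatrix (Fin.succ ∘ r)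
      (vecCons 0 (Fin.succ ∘ c))).det := by
  have hexp : StrictMono fun i ↦ (r i + 1 : ℕ) := fun i j hij ↦ Nat.succ_lt_succ (hr hij)
  have hlead : 0 < (A.submatrix (r ∘ Fin.succ) c).det := hA k _ c (hr.comp Fin.strictMono_succ) hc
  filter_upwards [eventually_sum_pow_mul_pos hexp
    (D := fun i ↦ (-1) ^ (i : ℕ) * (A.submatrix (r ∘ i.succAbove) c).det)
    (by simpa [Function.comp_def] using hlead)] with u hu
  rw [det_succ_column_zero]
  convert hu using 2 with i
  have hsub : ((border A (fun i ↦ u ^ (i + 1 : ℕ)) (w u)).submatrix (Fin.succ ∘ r)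
      (vecCons 0 (Fin.succ ∘ c))).submatrix i.succAbove Fin.succ =
        A.submatrix (r ∘ i.succAbove) c := rfl
  rw [hsub]
  simp
  ring

theorem eventually_border (hA : IsTPMat A) : ∀ᶠ u : ℝ in 𝓝[>] 0,
    IsTPMat (border A (fun i ↦ u ^ (i + 1 : ℕ)) fun j ↦ u ^ (j + 1 : ℕ)) := by
  refine eventually_isTPMat fun k r c hr hc ↦ ?_
  obtain _ | k := k
  · simp
  obtain ⟨r, hr', rfl⟩ | ⟨r, hr', rfl⟩ := strictMono_fin_succ_cases hr <;>
    obtain ⟨c, hc', rfl⟩ | ⟨c, hc', rfl⟩ := strictMono_fin_succ_cases hc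
  · exact .of_forall fun _ ↦ hA _ r c hr' hc'
  · exact hA.eventually_det_border_submatrix_succ_cons_pos _ hr' hc'
  · filter_upwards [hA.transpose.eventually_det_border_submatrix_succ_cons_pos
      (fun u i ↦ u ^ (i + 1 : ℕ)) hc' hr'] with u hu
    rwa [← border_transpose, ← transpose_submatrix, det_transpose] at hu
  · have hlim : Tendsto (fun u : ℝ ↦ (border (A.submatrix r c) (fun i ↦ u ^ (r i + 1 : ℕ))
        fun j ↦ u ^ (c j + 1 : ℕ)).det) (𝓝[>] 0) (𝓝 (A.submatrix r c).det) := by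
      have hcont := (continuous_border_pow (A.submatrix r c) (fun i ↦ (r i + 1 : ℕ))
        fun j ↦ (c j + 1 : ℕ)).matrix_det
      refine tendsto_nhdsWithin_of_tendsto_nhds ?_
      convert hcont.tendsto 0 using 2
      simpa [Pi.zero_def] using (det_border_zero (A.submatrix r c) 0).symm
    filter_upwards [hlim.eventually_const_lt (hA k r c hr' hc')] with u hu
    rwa [border_submatrix_cons]

end IsTPMat

end TotallyPositive

section Closure

variable {d e : ℕ} {A : Matrix (Fin d) (Fin d) ℝ}

/-- The set of symmetric totally positive `d × d` matrices. -/
def symmTP (d : ℕ) : Set (Matrix (Fin d) (Fin d) ℝ) := {A | A.IsSymm ∧ IsTPMat A}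

theorem isSymm_mul_mul_transpose (hA : A.IsSymm) (L : Matrix (Fin e) (Fin d) ℝ) :
    (L * A * Lᵀ).IsSymm := by
  rw [Matrix.IsSymm, transpose_mul, transpose_mul, transpose_transpose, hA.eq, Matrix.mul_assoc]

theorem eventually_border_mem_symmTP (hA : A ∈ symmTP d) : ∀ᶠ u : ℝ in 𝓝[>] 0,
    border A (fun i ↦ u ^ (i + 1 : ℕ)) (fun i ↦ u ^ (i + 1 : ℕ)) ∈ symmTP (d + 1) := by
  filter_upwards [hA.2.eventually_border] with u hu
  exact ⟨by rw [Matrix.IsSymm, border_transpose, hA.1.eq], hu⟩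

theorem border_zero_mem_closure (hA : A ∈ closure (symmTP d)) :
    border A 0 0 ∈ closure (symmTP (d + 1)) := by
  rw [← closure_closure]
  refine map_mem_closure (f := fun B ↦ border B 0 0) ?_ hA fun B hB ↦ ?_
  · refine continuous_matrix fun i j ↦ ?_
    cases i using Fin.cases <;> cases j using Fin.cases <;> simp only [border_zero_zero,
      border_zero_succ, border_succ_zero, border_succ_succ] <;> fun_prop
  · refine mem_closure_of_tendsto (b := 𝓝[>] (0 : ℝ)) (tendsto_nhdsWithin_of_tendsto_nhds ?_)
      (eventually_border_mem_symmTP hB)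
    convert (continuous_border_pow B (fun i ↦ (i + 1 : ℕ)) fun i ↦ (i + 1 : ℕ)).tendsto 0 using 3
      <;> simp [Pi.zero_def]

theorem one_mem_closure_symmTP (d : ℕ) : 1 ∈ closure (symmTP d) := by
  induction d with
  | zero =>
    refine subset_closure ⟨isSymm_one, fun k r c _ _ ↦ ?_⟩
    have := Function.isEmpty r
    simp
  | succ d ih => exact border_one_zero ▸ border_zero_mem_closure ih

/-- The matrices `L` for which the congruence `A ↦ L * A * Lᵀ` preserves the closure of the
symmetric totally positive matrices. -/
def congrSubmonoid (d : ℕ) : Submonoid (Matrix (Fin d) (Fin d) ℝ) where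
  carrier := {L | ∀ A ∈ closure (symmTP d), L * A * Lᵀ ∈ closure (symmTP d)}
  one_mem' := by simp
  mul_mem' {L M} hL hM A hA := by
    simpa [Matrix.mul_assoc] using hL _ (hM A hA)

theorem mem_congrSubmonoid_of_mapsTo {L : Matrix (Fin d) (Fin d) ℝ}
    (hL : ∀ A, IsTPMat A → IsTPMat (L * A * Lᵀ)) : L ∈ congrSubmonoid d := fun A hA ↦
  map_mem_closure (f := fun A ↦ L * A * Lᵀ) (by fun_prop) hA fun _ hB ↦
    ⟨isSymm_mul_mul_transpose hB.1 L, hL _ hB.2⟩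

theorem isClosed_congrSubmonoid (d : ℕ) :
    IsClosed (congrSubmonoid d : Set (Matrix (Fin d) (Fin d) ℝ)) := by
  change IsClosed {L | ∀ A ∈ closure (symmTP d), L * A * Lᵀ ∈ closure (symmTP d)}
  simp only [Set.ofPred_forall]
  exact isClosed_iInter fun A ↦ isClosed_iInter fun _ ↦
    isClosed_closure.preimage (by fun_prop)

theorem diagonal_mem_congrSubmonoid {x : Fin d → ℝ} (hx : ∀ i, 0 ≤ x i) :
    diagonal x ∈ congrSubmonoid d := by
  refine (isClosed_congrSubmonoid d).mem_of_tendsto (b := 𝓝[>] (0 : ℝ))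
    (f := fun s ↦ diagonal fun i ↦ x i + s) (tendsto_nhdsWithin_of_tendsto_nhds ?_) ?_
  · have hcont : Continuous fun s : ℝ ↦ diagonal fun i ↦ x i + s :=
      Continuous.matrix_diagonal (by fun_prop)
    simpa using hcont.tendsto 0
  · filter_upwards [self_mem_nhdsWithin] with s hs
    have hpos (i : Fin d) : 0 < x i + s := add_pos_of_nonneg_of_pos (hx i) hs
    refine mem_congrSubmonoid_of_mapsTo fun A hA ↦ ?_
    simpa using (hA.diagonal_mul hpos).mul_diagonal hpos

theorem addRow_mem_congrSubmonoid (i j : Fin d) (hij : (i : ℕ) + 1 = j) {t : ℝ} (ht : 0 ≤ t)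
    {L : Matrix (Fin d) (Fin d) ℝ} (hL : L ∈ congrSubmonoid d) :
    L.updateRow j (L j + t • L i) ∈ congrSubmonoid d := by
  have hcov : i ⋖ j := by simp [Fin.covBy_iff, hij]
  have hmem : transvection j i t ∈ congrSubmonoid d := mem_congrSubmonoid_of_mapsTo fun _ hA ↦
    (hA.transvection_mul ht hcov).mul_transpose_transvection ht hcov
  convert mul_mem hmem hL using 1
  ext a b
  rcases eq_or_ne a j with rfl | ha <;> simp [*]

theorem mul_diagonal_mul_transpose_mem_closure {L : Matrix (Fin d) (Fin d) ℝ}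
    (hL : L ∈ congrSubmonoid d) {w : Fin d → ℝ} (hw : ∀ i, 0 ≤ w i) :
    L * diagonal w * Lᵀ ∈ closure (symmTP d) := by
  have hsqrt := diagonal_mem_congrSubmonoid (x := fun i ↦ √(w i)) fun i ↦ Real.sqrt_nonneg _
  simpa [hw] using hL _ (hsqrt 1 (one_mem_closure_symmTP d))

end Closure

section TestMatrices

theorem rankOne_mem_closure {s u v : ℝ} (hs : 0 < s) (hu : 0 < u) (hv : 0 < v) :
    s • vecMulVec ![u, 1, v] ![u, 1, v] ∈ closure (symmTP 3) := by
  have hL : !![1, 0, 0; u⁻¹, 1, 0; u⁻¹ * v, v, 1] ∈ congrSubmonoid 3 := by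
    convert addRow_mem_congrSubmonoid (1 : Fin 3) 2 rfl hv.le
      (addRow_mem_congrSubmonoid (0 : Fin 3) 1 rfl (inv_nonneg.mpr hu.le) (one_mem _))
      using 1
    ext i j
    fin_cases i <;> fin_cases j <;> simp [updateRow_apply, mul_comm]
  have hw : 0 ≤ s * u ^ 2 := by positivity
  convert mul_diagonal_mul_transpose_mem_closure hL (w := ![s * u ^ 2, 0, 0]) (by
    simpa [Fin.forall_fin_succ] using hw) using 1
  ext i j
  fin_cases i <;> fin_cases j <;>
    simp [Fin.sum_univ_three, Matrix.mul_apply (N := _ᵀ), vecMul_diagonal] <;> field_simp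
  simp

-- The Gram matrix of `(1, 0), (1, 1), (0, 1)`.
theorem gramThree_mem_closure : !![1, 1, 0; 1, 2, 1; 0, 1, 1] ∈ closure (symmTP 3) := by
  have hL : !![1, 0, 0; 1, 1, 0; 0, 1, 1] ∈ congrSubmonoid 3 := by
    convert addRow_mem_congrSubmonoid (0 : Fin 3) 1 rfl zero_le_one
      (addRow_mem_congrSubmonoid (1 : Fin 3) 2 rfl zero_le_one (one_mem _)) using 1
    ext i j
    fin_cases i <;> fin_cases j <;> simp [updateRow_apply]
  convert mul_diagonal_mul_transpose_mem_closure hL (w := ![1, 1, 0]) (by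
    simp [Fin.forall_fin_succ]) using 1
  ext i j
  fin_cases i <;> fin_cases j <;>
    simp [Fin.sum_univ_three, Matrix.mul_apply (N := _ᵀ), vecMul_diagonal, one_add_one_eq_two]

-- The Gram matrix of `(1, 0), (1, s), (1, 1), (0, 1)`.
theorem gramFour_mem_closure {s : ℝ} (hs0 : 0 < s) (hs1 : s < 1) :
    !![1, 1, 1, 0; 1, 1 + s ^ 2, 1 + s, s; 1, 1 + s, 2, 1; 0, s, 1, 1] ∈ closure (symmTP 4) := by
  have hs : 0 < 1 - s := sub_pos.mpr hs1
  have hL : !![1, 0, 0, 0; 1, 1, 0, 0; 1, s⁻¹, 1, 0; 0, s⁻¹, (1 - s)⁻¹, 1] ∈ congrSubmonoid 4 := by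
    have hs' : 0 ≤ (1 - s) / s := by positivity
    convert addRow_mem_congrSubmonoid (1 : Fin 4) 2 rfl zero_le_one
      (addRow_mem_congrSubmonoid (0 : Fin 4) 1 rfl zero_le_one
      (addRow_mem_congrSubmonoid (2 : Fin 4) 3 rfl (inv_nonneg.mpr hs.le)
      (addRow_mem_congrSubmonoid (1 : Fin 4) 2 rfl hs' (one_mem _)))) using 1
    ext i j
    fin_cases i <;> fin_cases j <;> simp [updateRow_apply] <;> field_simp
    ring
  convert mul_diagonal_mul_transpose_mem_closure hL (w := ![1, s ^ 2, 0, 0]) (by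
    simp [Fin.forall_fin_succ, sq_nonneg]) using 1
  ext i j
  fin_cases i <;> fin_cases j <;>
    simp [Fin.sum_univ_four, Matrix.mul_apply (N := _ᵀ), vecMul_diagonal] <;> field_simp
  norm_num

-- The all-ones matrix plus `ε * (v vᵀ + w wᵀ)` with `v = (0, 1, 2, 3, 4)`, `w = (0, 0, 0, 1, 2)`.
theorem gramFive_mem_closure {ε : ℝ} (hε : 0 ≤ ε) :
    !![1, 1, 1, 1, 1;
      1, 1 + ε, 1 + 2 * ε, 1 + 3 * ε, 1 + 4 * ε;
      1, 1 + 2 * ε, 1 + 4 * ε, 1 + 6 * ε, 1 + 8 * ε;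
      1, 1 + 3 * ε, 1 + 6 * ε, 1 + 10 * ε, 1 + 14 * ε;
      1, 1 + 4 * ε, 1 + 8 * ε, 1 + 14 * ε, 1 + 20 * ε] ∈ closure (symmTP 5) := by
  have hL : !![1, 0, 0, 0, 0; 1, 1, 0, 0, 0; 1, 2, 1, 0, 0; 1, 3, 2, 1, 0; 1, 4, 3, 2, 1] ∈
      congrSubmonoid 5 := by
    have hadd {L : Matrix (Fin 5) (Fin 5) ℝ} (i j : Fin 5) (hij : (i : ℕ) + 1 = j)
        (hL : L ∈ congrSubmonoid 5) := addRow_mem_congrSubmonoid i j hij zero_le_one hL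
    have hL' : !![1, 0, 0, 0, 0; 0, 1, 0, 0, 0; 0, 1, 1, 0, 0; 0, 1, 1, 1, 0; 0, 1, 1, 1, 1] ∈
        congrSubmonoid 5 := by
      convert hadd 3 4 rfl (hadd 2 3 rfl (hadd 1 2 rfl (one_mem _))) using 1
      ext i j
      fin_cases i <;> fin_cases j <;> simp [updateRow_apply]
    convert hadd 3 4 rfl (hadd 2 3 rfl (hadd 1 2 rfl (hadd 0 1 rfl hL'))) using 1
    ext i j
    fin_cases i <;> fin_cases j <;> simp [updateRow_apply] <;> norm_num
  convert mul_diagonal_mul_transpose_mem_closure hL (w := ![1, ε, 0, ε, 0]) (by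
    simp [Fin.forall_fin_succ, hε]) using 1
  ext i j
  fin_cases i <;> fin_cases j <;>
    simp [Fin.sum_univ_five, Matrix.mul_apply (N := _ᵀ), vecMul_diagonal] <;> ring

end TestMatrices

section Preservers

/-- `F` applied entrywise maps symmetric totally positive `d × d` matrices to totally positive
matrices. -/
def PreservesSymmTP (F : ℝ → ℝ) (d : ℕ) : Prop :=
  ∀ A : Matrix (Fin d) (Fin d) ℝ, A.IsSymm → IsTPMat A → IsTPMat (A.map F)

namespace PreservesSymmTP

variable {F G : ℝ → ℝ} {d e : ℕ}

theorem of_succ (hF : PreservesSymmTP F (d + 1)) : PreservesSymmTP F d := fun A hA hAtp ↦ by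
  obtain ⟨u, hsymm, htp⟩ := (eventually_border_mem_symmTP ⟨hA, hAtp⟩).exists
  exact (hF _ hsymm htp).submatrix Fin.strictMono_succ Fin.strictMono_succ

theorem mono (hF : PreservesSymmTP F e) (hde : d ≤ e) : PreservesSymmTP F d := by
  induction e, hde using Nat.le_induction with
  | base => exact hF
  | succ e _ ih => exact ih hF.of_succ

theorem congr (hF : PreservesSymmTP F d) (hFG : ∀ x, 0 < x → F x = G x) :
    PreservesSymmTP G d := fun A hA hAtp ↦
  isTPMat_map_congr hAtp hFG ▸ hF A hA hAtp

theorem const_mul (hF : PreservesSymmTP F d) {c : ℝ} (hc : 0 < c) :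
    PreservesSymmTP (fun x ↦ c * F x) d := fun A hA hAtp k r s hr hs ↦ by
  have h : (A.map fun x ↦ c * F x).submatrix r s = c • (A.map F).submatrix r s := rfl
  rw [h, det_smul]
  exact mul_pos (pow_pos hc _) (hF A hA hAtp k r s hr hs)

theorem minor_nonneg (hF : PreservesSymmTP F d) {B : Matrix (Fin d) (Fin d) ℝ}
    (hB : B ∈ closure (symmTP d)) (hcont : ∀ i j, ContinuousAt F (B i j)) {k : ℕ}
    {r c : Fin k → Fin d} (hr : StrictMono r) (hc : StrictMono c) :
    0 ≤ ((B.map F).submatrix r c).det := by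
  have hmap : ContinuousAt (fun A : Matrix (Fin d) (Fin d) ℝ ↦ A.map F) B :=
    continuousAt_pi.mpr fun i ↦ continuousAt_pi.mpr fun j ↦
      ContinuousAt.comp (f := fun A : Matrix (Fin d) (Fin d) ℝ ↦ A i j) (hcont i j)
        (continuous_id.matrix_elem i j).continuousAt
  have hdet : ContinuousAt (fun A : Matrix (Fin d) (Fin d) ℝ ↦ ((A.map F).submatrix r c).det) B :=
    ((continuous_id.matrix_submatrix r c).matrix_det.continuousAt).comp hmap
  exact isClosed_Ici.mem_of_frequently_of_tendsto
    ((mem_closure_iff_frequently.mp hB).mono fun A hA ↦ (hF A hA.1 hA.2 k r c hr hc).le) hdet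

end PreservesSymmTP

theorem preservesSymmTP_const_mul_rpow_iff {c : ℝ} (hc : 0 < c) {α : ℝ} {d : ℕ} {F : ℝ → ℝ}
    (hF : ∀ x, 0 < x → F x = c * x ^ α) :
    PreservesSymmTP F d ↔ PreservesSymmTP (· ^ α) d := by
  refine ⟨fun h ↦ (h.const_mul (inv_pos.mpr hc)).congr fun x hx ↦ ?_, fun h ↦
    (h.const_mul hc).congr fun x hx ↦ (hF x hx).symm⟩
  rw [hF x hx, inv_mul_cancel_left₀ hc.ne']

end Preservers

section Regularity

theorem continuous_of_monotone_of_sq_le_mul {g : ℝ → ℝ} (hmono : Monotone g) (hpos : ∀ x, 0 < g x)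
    (hg : ∀ x y z, 2 * y < x + z → g y ^ 2 ≤ g x * g z) : Continuous g := by
  refine continuous_iff_continuousAt.mpr fun t ↦
    hmono.continuousAt_iff_leftLim_eq_rightLim.mpr
      (le_antisymm (hmono.leftLim_le_rightLim le_rfl) ?_)
  have hbound (z : ℝ) (hz : t < z) :
      Function.rightLim g t ^ 2 ≤ Function.leftLim g t * g z := calc
    _ ≤ g (t + (z - t) / 4) ^ 2 := by
      gcongr
      · exact (hpos t).le.trans (hmono.le_rightLim le_rfl)
      · exact hmono.rightLim_le (by linarith)
    _ ≤ g (t - (z - t) / 4) * g z := hg _ _ _ (by linarith)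
    _ ≤ Function.leftLim g t * g z := by
      gcongr
      · exact (hpos z).le
      · exact hmono.le_leftLim (by linarith)
  have hlim : Function.rightLim g t ^ 2 ≤ Function.leftLim g t * Function.rightLim g t :=
    ge_of_tendsto ((hmono.tendsto_rightLim t).const_mul _)
      (by filter_upwards [self_mem_nhdsWithin] with z hz using hbound z hz)
  have hRpos : 0 < Function.rightLim g t := (hpos t).trans_le (hmono.le_rightLim le_rfl)
  rw [sq] at hlim
  exact le_of_mul_le_mul_right hlim hRpos

theorem exists_eq_rpow_of_map_mul {F : ℝ → ℝ} (hpos : ∀ x, 0 < x → 0 < F x)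
    (hcont : ContinuousOn F (Set.Ioi 0)) (hmul : ∀ x y, 0 < x → 0 < y → F (x * y) = F x * F y) :
    ∃ α : ℝ, ∀ x, 0 < x → F x = x ^ α := by
  have hpos' (t : ℝ) : F (Real.exp t) ≠ 0 := (hpos _ (Real.exp_pos t)).ne'
  let G : ℝ →+ ℝ := .mk' (fun t ↦ Real.log (F (Real.exp t))) fun s t ↦ by
    rw [Real.exp_add, hmul _ _ (Real.exp_pos s) (Real.exp_pos t),
      Real.log_mul (hpos' s) (hpos' t)]
  have hG : Continuous G :=
    (hcont.comp_continuous Real.continuous_exp Real.exp_pos).log hpos'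
  refine ⟨G 1, fun x hx ↦ ?_⟩
  have hlin : Real.log (F x) = Real.log x * G 1 := by
    simpa [G, Real.exp_log hx] using map_real_smul G hG (Real.log x) 1
  rw [Real.rpow_def_of_pos hx, ← hlin, Real.exp_log (hpos x hx)]

end Regularity

theorem isTPMat_of_det_pos {n : ℕ} {A : Matrix (Fin n) (Fin n) ℝ} (hdet : 0 < A.det)
    (hminor : ∀ k < n, ∀ r c : Fin k → Fin n, StrictMono r → StrictMono c →
      0 < (A.submatrix r c).det) : IsTPMat A := by
  intro k r c hr hc
  have hk : k ≤ n := by simpa using Fintype.card_le_of_injective r hr.injective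
  obtain hk | rfl := hk.lt_or_eq
  · exact hminor k hk r c hr hc
  · rw [hr.eq_id, hc.eq_id, submatrix_id_id]
    exact hdet

theorem isTPMat_fin_one {A : Matrix (Fin 1) (Fin 1) ℝ} (hpos : 0 < A 0 0) : IsTPMat A :=
  isTPMat_of_det_pos (by simpa using hpos) fun k hk r c _ _ ↦ by
    obtain rfl := Nat.lt_one_iff.mp hk
    simp

theorem isTPMat_fin_two {A : Matrix (Fin 2) (Fin 2) ℝ} (hpos : ∀ i j, 0 < A i j)
    (hdet : A 0 1 * A 1 0 < A 0 0 * A 1 1) : IsTPMat A := by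
  refine isTPMat_of_det_pos (by rwa [det_fin_two, sub_pos]) fun k hk r c _ _ ↦ ?_
  interval_cases k
  · simp
  · simpa using hpos _ _

namespace PreservesSymmTP

variable {F : ℝ → ℝ}

theorem pos (hF : PreservesSymmTP F 1) {x : ℝ} (hx : 0 < x) : 0 < F x := by
  have hsymm : (!![x] : Matrix (Fin 1) (Fin 1) ℝ).IsSymm := by ext i j; fin_cases i, j; rfl
  simpa using (hF !![x] hsymm (isTPMat_fin_one (by simpa using hx))).pos 0 0

theorem sq_lt_mul (hF : PreservesSymmTP F 2) {x y z : ℝ} (hx : 0 < x) (hy : 0 < y) (hz : 0 < z)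
    (hxyz : y ^ 2 < x * z) : F y ^ 2 < F x * F z := by
  have hsymm : (!![x, y; y, z] : Matrix (Fin 2) (Fin 2) ℝ).IsSymm := by
    ext i j
    fin_cases i <;> fin_cases j <;> rfl
  have htp : IsTPMat !![x, y; y, z] := by
    refine isTPMat_fin_two ?_ (by simpa [← sq] using hxyz)
    simp [Fin.forall_fin_two, hx, hy, hz]
  have hdet := (hF _ hsymm htp).det_pos
  rw [det_fin_two] at hdet
  simpa [← sq] using hdet

theorem strictMonoOn (hF : PreservesSymmTP F 2) : StrictMonoOn F (Set.Ioi 0) := by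
  intro x (hx : 0 < x) y (hy : 0 < y) hxy
  have hlt := hF.sq_lt_mul hy hx hx (by nlinarith)
  rw [sq] at hlt
  exact lt_of_mul_lt_mul_right hlt (hF.of_succ.pos hx).le

theorem continuousOn (hF : PreservesSymmTP F 2) : ContinuousOn F (Set.Ioi 0) := by
  have hexp : Continuous (F ∘ Real.exp) := by
    refine continuous_of_monotone_of_sq_le_mul (fun s t hst ↦ ?_)
      (fun t ↦ hF.of_succ.pos (Real.exp_pos t)) fun x y z hxyz ↦ ?_
    · exact hF.strictMonoOn.monotoneOn (Real.exp_pos s) (Real.exp_pos t) (Real.exp_monotone hst)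
    · refine (hF.sq_lt_mul (Real.exp_pos x) (Real.exp_pos y) (Real.exp_pos z) ?_).le
      rwa [sq, ← Real.exp_add, ← Real.exp_add, Real.exp_lt_exp, ← two_mul]
  have hlog : ContinuousOn Real.log (Set.Ioi 0) :=
    Real.continuousOn_log.mono fun x (hx : 0 < x) ↦ hx.ne'
  refine (hexp.comp_continuousOn hlog).congr fun x hx ↦ ?_
  simp [Real.exp_log hx]

theorem sq_sqrt_mul_le (hF : PreservesSymmTP F 2) {x y : ℝ} (hx : 0 < x) (hy : 0 < y) :
    F √(x * y) ^ 2 ≤ F x * F y := by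
  have hxy : 0 < √(x * y) := Real.sqrt_pos.mpr (mul_pos hx hy)
  have hcont := (hF.continuousOn.continuousAt (Ioi_mem_nhds hxy)).pow 2
  refine le_of_tendsto (hcont.mono_left nhdsWithin_le_nhds : Tendsto _ (𝓝[<] √(x * y)) _) ?_
  filter_upwards [Ioo_mem_nhdsLT hxy] with z hz
  exact (hF.sq_lt_mul hx hz.1 hy ((Real.lt_sqrt hz.1.le).mp hz.2)).le

theorem map_mul_map_le (hF : PreservesSymmTP F 3) {p q s t : ℝ} (hp : 0 < p) (hq : 0 < q)
    (hs : 0 < s) (hpqst : p * q = s * t) : F s * F t ≤ F p * F q := by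
  have hmem := rankOne_mem_closure hs (div_pos hp hs) (div_pos hq hs)
  have hpos : ∀ i, 0 < ![p / s, 1, q / s] i := by simp [Fin.forall_fin_succ, hp, hq, hs]
  have hcont : ∀ i j, ContinuousAt F
      ((s • vecMulVec ![p / s, 1, q / s] ![p / s, 1, q / s] : Matrix _ _ ℝ) i j) := fun i j ↦
    hF.of_succ.continuousOn.continuousAt (Ioi_mem_nhds (smul_pos hs (mul_pos (hpos i) (hpos j))))
  have hminor := hF.minor_nonneg hmem hcont (r := ![0, 1]) (c := ![1, 2]) (by decide) (by decide)
  have hcorner : s * (p / s * (q / s)) = t := by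
    field_simp
    linarith
  rw [det_fin_two] at hminor
  simp [hcorner, mul_div_cancel₀ _ hs.ne'] at hminor
  linarith

theorem pos_of_rpow {α : ℝ} (hα : PreservesSymmTP (· ^ α) 2) : 0 < α := by
  have h12 : (1 : ℝ) ^ α < 2 ^ α :=
    hα.strictMonoOn (Set.mem_Ioi.mpr one_pos) (Set.mem_Ioi.mpr two_pos) one_lt_two
  rw [Real.one_rpow] at h12
  exact (Real.one_lt_rpow_iff_of_pos two_pos).mp h12 |>.resolve_right (by norm_num) |>.2

theorem exists_eq_mul_rpow (hF : PreservesSymmTP F 3) :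
    ∃ c : ℝ, 0 < c ∧ ∃ α : ℝ, ∀ x, 0 < x → F x = c * x ^ α := by
  have hF2 := hF.of_succ
  have hpos {x : ℝ} (hx : 0 < x) : 0 < F x := hF2.of_succ.pos hx
  have hmul (x y : ℝ) (hx : 0 < x) (hy : 0 < y) : F x * F y = F 1 * F (x * y) :=
    le_antisymm (hF.map_mul_map_le one_pos (mul_pos hx hy) hx (one_mul _))
      (hF.map_mul_map_le hx hy one_pos (one_mul _).symm)
  have h1 := hpos one_pos
  obtain ⟨α, hα⟩ := exists_eq_rpow_of_map_mul (F := fun x ↦ F x / F 1)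
    (fun x hx ↦ div_pos (hpos hx) h1) (hF2.continuousOn.div_const _) fun x y hx hy ↦ by
      rw [div_mul_div_comm, hmul x y hx hy, mul_div_mul_left _ _ h1.ne']
  refine ⟨F 1, h1, α, fun x hx ↦ ?_⟩
  rw [← hα x hx, mul_div_cancel₀ _ h1.ne']

end PreservesSymmTP

section Asymptotics

theorem tendsto_one_add_mul_rpow_sub_one_div (α s : ℝ) :
    Tendsto (fun ε : ℝ ↦ ((1 + s * ε) ^ α - 1) / ε) (𝓝[>] 0) (𝓝 (α * s)) := by
  have hderiv : HasDerivAt (fun ε : ℝ ↦ (1 + s * ε) ^ α) (s * 1 * α * (1 + s * 0) ^ (α - 1)) 0 :=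
    (((hasDerivAt_id (0 : ℝ)).const_mul s).const_add 1).rpow_const (Or.inl (by simp))
  simpa [div_eq_inv_mul, mul_comm] using hderiv.tendsto_slope_zero_right

theorem tendsto_one_add_mul_rpow_second_difference (α : ℝ) {s : ℝ} (hs : 0 ≤ s) :
    Tendsto (fun ε : ℝ ↦ ((1 + 2 * s * ε) ^ α - 2 * (1 + s * ε) ^ α + 1) / ε ^ 2) (𝓝[>] 0)
      (𝓝 (α * (α - 1) * s ^ 2)) := by
  have hpow {u ε : ℝ} (hu : 0 ≤ u) (hε : 0 ≤ ε) :
      HasDerivAt (fun ε : ℝ ↦ (1 + u * ε) ^ α) (u * 1 * α * (1 + u * ε) ^ (α - 1)) ε :=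
    have hbase : 1 + u * ε ≠ 0 := by positivity
    (((hasDerivAt_id ε).const_mul u).const_add 1).rpow_const (Or.inl hbase)
  have hnum {ε : ℝ} (hε : 0 ≤ ε) := ((hpow (by positivity : 0 ≤ 2 * s) hε).sub
    ((hpow hs hε).const_mul 2)).add_const 1
  have hden (ε : ℝ) := hasDerivAt_pow 2 ε
  refine HasDerivAt.lhopital_zero_nhdsGT
    (eventually_mem_nhdsWithin.mono fun ε hε ↦ hnum (le_of_lt hε)) (.of_forall hden)
    (eventually_mem_nhdsWithin.mono fun ε (hε : 0 < ε) ↦ by simpa using hε.ne') ?_ ?_ ?_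
  · have := (hnum le_rfl).continuousAt.tendsto
    norm_num at this
    exact this.mono_left nhdsWithin_le_nhds
  · simpa using (hden 0).continuousAt.tendsto.mono_left nhdsWithin_le_nhds
  · have hlim := ((tendsto_one_add_mul_rpow_sub_one_div (α - 1) (2 * s)).sub
      (tendsto_one_add_mul_rpow_sub_one_div (α - 1) s)).const_mul (α * s)
    convert hlim.congr' ?_ using 2
    · ring
    · filter_upwards [self_mem_nhdsWithin] with ε (hε : 0 < ε)
      field_simp
      ring

theorem det_eq_pow_mul_det_differences {ε : ℝ} (hε : ε ≠ 0) (x y z : Fin 4 → ℝ) :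
    (of ![fun _ ↦ 1, x, y, z]).det = ε ^ 4 * (of ![fun _ ↦ 1, fun j ↦ (x j - 1) / ε,
      fun j ↦ (y j - 2 * x j + 1) / ε ^ 2, fun j ↦ (z j - 1) / ε]).det := by
  have hlower : (!![1, 0, 0, 0; 1, ε, 0, 0; 1, 2 * ε, ε ^ 2, 0; 1, 0, 0, ε]).det = ε ^ 4 := by
    rw [det_succ_row_zero]
    simp [Fin.sum_univ_succ, det_fin_three, Fin.succAbove]
    ring
  rw [← hlower, ← det_mul]
  congr 1
  ext i j
  fin_cases i <;> simp [Matrix.mul_apply, Fin.sum_univ_four] <;> field_simp <;> ring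

theorem det_limit_nonneg_of_det_rpow_nonneg {α : ℝ} {s t : Fin 4 → ℝ} (hs : ∀ j, 0 ≤ s j)
    (hdet : ∀ ε > 0, 0 ≤ (of ![fun _ ↦ 1, fun j ↦ (1 + s j * ε) ^ α,
      fun j ↦ (1 + 2 * s j * ε) ^ α, fun j ↦ (1 + t j * ε) ^ α]).det) :
    0 ≤ (of ![fun _ ↦ 1, fun j ↦ α * s j, fun j ↦ α * (α - 1) * s j ^ 2,
      fun j ↦ α * t j]).det := by
  let N (ε : ℝ) : Matrix (Fin 4) (Fin 4) ℝ := of ![fun _ ↦ 1,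
    fun j ↦ ((1 + s j * ε) ^ α - 1) / ε,
    fun j ↦ ((1 + 2 * s j * ε) ^ α - 2 * (1 + s j * ε) ^ α + 1) / ε ^ 2,
    fun j ↦ ((1 + t j * ε) ^ α - 1) / ε]
  have hN : Tendsto N (𝓝[>] 0) (𝓝 (of ![fun _ ↦ 1, fun j ↦ α * s j,
      fun j ↦ α * (α - 1) * s j ^ 2, fun j ↦ α * t j])) := by
    refine tendsto_pi_nhds.mpr fun i ↦ tendsto_pi_nhds.mpr fun j ↦ ?_
    fin_cases i
    · exact tendsto_const_nhds
    · exact tendsto_one_add_mul_rpow_sub_one_div α (s j)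
    · exact tendsto_one_add_mul_rpow_second_difference α (hs j)
    · exact tendsto_one_add_mul_rpow_sub_one_div α (t j)
  refine ge_of_tendsto ((continuous_id.matrix_det.tendsto _).comp hN) ?_
  filter_upwards [self_mem_nhdsWithin] with ε (hε : 0 < ε)
  have hε_det := hdet ε hε
  rw [det_eq_pow_mul_det_differences hε.ne'] at hε_det
  exact nonneg_of_mul_nonneg_right hε_det (by positivity)

end Asymptotics

namespace PreservesSymmTP

variable {α : ℝ}

theorem one_le_of_rpow_three (h : PreservesSymmTP (· ^ α) 3) : 1 ≤ α := by
  have hα := h.of_succ.pos_of_rpow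
  have hdet := h.minor_nonneg gramThree_mem_closure
    (fun _ _ ↦ (Real.continuous_rpow_const hα.le).continuousAt) strictMono_id strictMono_id
  rw [submatrix_id_id, det_fin_three] at hdet
  simp [Real.zero_rpow hα.ne'] at hdet
  by_contra! hα1
  have := Real.rpow_lt_rpow_of_exponent_lt one_lt_two hα1
  rw [Real.rpow_one] at this
  linarith

theorem rpow_four_minor_nonneg (h : PreservesSymmTP (· ^ α) 4) (hα : 0 < α) {s : ℝ}
    (hs0 : 0 < s) (hs1 : s < 1) :
    0 ≤ ((1 + s ^ 2) ^ α - 1 - (s ^ α) ^ 2) * (2 ^ α - 2) - ((1 + s) ^ α - 1 - s ^ α) ^ 2 := by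
  have hdet := h.minor_nonneg (gramFour_mem_closure hs0 hs1)
    (fun _ _ ↦ (Real.continuous_rpow_const hα.le).continuousAt) strictMono_id strictMono_id
  rw [submatrix_id_id, det_succ_row_zero] at hdet
  simp [Fin.sum_univ_succ, det_fin_three, Fin.succAbove, Real.zero_rpow hα.ne'] at hdet
  linarith

theorem sq_le_of_rpow_four (h : PreservesSymmTP (· ^ α) 4) (hα : 1 < α) :
    α ^ 2 ≤ α * (2 ^ α - 2) := by
  have hsq : Tendsto (fun s : ℝ ↦ s ^ 2) (𝓝[>] 0) (𝓝[>] 0) :=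
    tendsto_nhdsWithin_iff.mpr ⟨((continuous_pow 2).tendsto' 0 0 (by simp)).mono_left
      nhdsWithin_le_nhds, eventually_mem_nhdsWithin.mono fun s (hs : 0 < s) ↦ pow_pos hs 2⟩
  have hslope := tendsto_one_add_mul_rpow_sub_one_div α 1
  have hpow : Tendsto (fun s : ℝ ↦ s ^ (α - 1)) (𝓝[>] 0) (𝓝 0) :=
    ((Real.continuous_rpow_const (sub_nonneg.mpr hα.le)).tendsto' 0 0
      (Real.zero_rpow (sub_ne_zero.mpr hα.ne'))).mono_left nhdsWithin_le_nhds
  have hlim := (((hslope.comp hsq).sub (hpow.pow 2)).mul_const (2 ^ α - 2)).sub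
    ((hslope.sub hpow).pow 2)
  have hlim_nonneg := ge_of_tendsto (b := 0) hlim ?_
  · linarith
  filter_upwards [Ioo_mem_nhdsGT one_pos] with s ⟨hs0, hs1⟩
  convert div_nonneg (h.rpow_four_minor_nonneg (by linarith) hs0 hs1) (sq_nonneg s) using 1
  simp only [Function.comp_apply, one_mul, Real.rpow_sub_one hs0.ne']
  field_simp

theorem two_le_of_rpow_four (h : PreservesSymmTP (· ^ α) 4) (hα : 1 < α) : 2 ≤ α := by
  by_contra! hα2
  have hbern := rpow_one_add_le_one_add_mul_self (s := 1) (p := α - 1) (by norm_num)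
    (by linarith) (by linarith)
  rw [one_add_one_eq_two, Real.rpow_sub_one two_ne_zero] at hbern
  have := le_of_mul_le_mul_left (sq α ▸ h.sq_le_of_rpow_four hα) (by linarith)
  linarith

theorem rpow_five_minor_nonneg (h : PreservesSymmTP (· ^ α) 5) (hα : 0 ≤ α) {ε : ℝ}
    (hε : 0 ≤ ε) : 0 ≤ (of ![fun _ ↦ 1, fun j ↦ (1 + ![1, 2, 3, 4] j * ε) ^ α,
      fun j ↦ (1 + 2 * ![1, 2, 3, 4] j * ε) ^ α, fun j ↦ (1 + ![3, 6, 10, 14] j * ε) ^ α]).det := by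
  convert h.minor_nonneg (gramFive_mem_closure hε)
    (fun _ _ ↦ (Real.continuous_rpow_const hα).continuousAt)
    (r := ![0, 1, 2, 3]) (c := ![1, 2, 3, 4]) (by decide) (by decide) using 2
  ext i j
  fin_cases i <;> fin_cases j <;> simp <;> norm_num

theorem le_one_of_rpow_five (h : PreservesSymmTP (· ^ α) 5) : α ≤ 1 := by
  by_contra! hα
  have hα0 : 0 < α := by linarith
  have hdet := det_limit_nonneg_of_det_rpow_nonneg (s := ![1, 2, 3, 4]) (t := ![3, 6, 10, 14])
    (by simp [Fin.forall_fin_succ])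
    (fun ε hε ↦ h.rpow_five_minor_nonneg hα0.le (le_of_lt hε))
  rw [det_succ_row_zero] at hdet
  simp [Fin.sum_univ_succ, det_fin_three, Fin.succAbove] at hdet
  nlinarith [mul_pos (pow_pos hα0 3) (sub_pos.mpr hα)]

end PreservesSymmTP

section PowerInequalities

variable {α : ℝ}

theorem one_sub_mul_one_sub_rpow_le (hα : 1 ≤ α) {w z : ℝ} (hw : 0 ≤ w) (hwz : w ≤ z)
    (hz : z < 1) : (1 - z) * (1 - w ^ α) ≤ (1 - w) * (1 - z ^ α) := by
  have hslope := (convexOn_rpow hα).secant_mono (Set.mem_Ici.mpr zero_le_one) hw (hw.trans hwz)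
    (hwz.trans_lt hz).ne hz.ne hwz
  rw [Real.one_rpow, ← neg_div_neg_eq, ← neg_div_neg_eq (z ^ α - 1), neg_sub, neg_sub, neg_sub,
    neg_sub, div_le_div_iff₀ (by linarith) (by linarith)] at hslope
  linarith

theorem sub_one_mul_rpow_mul_le (hα : 1 ≤ α) {x y : ℝ} (hx : 1 < x) (hxy : x ≤ y) :
    (x - 1) * x ^ (α - 1) * (y ^ α - 1) ≤ (y - 1) * y ^ (α - 1) * (x ^ α - 1) := by
  have hx0 : 0 < x := by linarith
  have hy0 : 0 < y := by linarith
  have hinv := one_sub_mul_one_sub_rpow_le hα (inv_nonneg.mpr hy0.le) (inv_anti₀ hx0 hxy)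
    (inv_lt_one_of_one_lt₀ hx)
  rw [Real.inv_rpow hx0.le, Real.inv_rpow hy0.le] at hinv
  rw [Real.rpow_sub_one hx0.ne', Real.rpow_sub_one hy0.ne']
  have : 0 < x ^ α := Real.rpow_pos_of_pos hx0 α
  have : 0 < y ^ α := Real.rpow_pos_of_pos hy0 α
  calc (x - 1) * (x ^ α / x) * (y ^ α - 1)
      = x ^ α * y ^ α * ((1 - x⁻¹) * (1 - (y ^ α)⁻¹)) := by field_simp
    _ ≤ x ^ α * y ^ α * ((1 - y⁻¹) * (1 - (x ^ α)⁻¹)) := by gcongr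
    _ = (y - 1) * (y ^ α / y) * (x ^ α - 1) := by field_simp

theorem one_add_rpow_sub_one_pos (hα : 0 < α) {u : ℝ} (hu : 0 < u) : 0 < (1 + u) ^ α - 1 :=
  sub_pos.mpr (Real.one_lt_rpow (by linarith) hα)

theorem hasDerivAt_one_add_mul_rpow_sub_one (α : ℝ) {r u : ℝ} (hru : 0 < 1 + r * u) :
    HasDerivAt (fun u ↦ (1 + r * u) ^ α - 1) (r * α * (1 + r * u) ^ (α - 1)) u := by
  simpa using ((((hasDerivAt_id u).const_mul r).const_add 1).rpow_const (p := α)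
    (Or.inl hru.ne')).sub_const 1

theorem monotoneOn_one_add_mul_rpow_sub_one_div (hα : 1 ≤ α) {ρ : ℝ} (hρ : 1 ≤ ρ) :
    MonotoneOn (fun u : ℝ ↦ ((1 + ρ * u) ^ α - 1) / ((1 + u) ^ α - 1)) (Set.Ioi 0) := by
  have hderiv {u : ℝ} (hu : 0 < u) := (hasDerivAt_one_add_mul_rpow_sub_one α
    (by positivity : 0 < 1 + ρ * u)).fun_div
      (by simpa only [one_mul] using
        hasDerivAt_one_add_mul_rpow_sub_one α (by linarith : 0 < 1 + 1 * u))
      (one_add_rpow_sub_one_pos (zero_lt_one.trans_le hα) hu).ne'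
  refine monotoneOn_of_deriv_nonneg (convex_Ioi 0)
    (fun u hu ↦ (hderiv hu).continuousAt.continuousWithinAt)
    (fun u hu ↦ (hderiv (interior_subset hu)).differentiableAt.differentiableWithinAt)
    fun u hu ↦ ?_
  have hu : 0 < u := interior_subset hu
  rw [(hderiv hu).deriv]
  refine div_nonneg (le_of_mul_le_mul_left ?_ hu) (sq_nonneg _)
  have hle := sub_one_mul_rpow_mul_le hα (x := 1 + u) (y := 1 + ρ * u) (by linarith)
    (by nlinarith)
  linear_combination α * hle

theorem rpow_sub_one_mul_rpow_sub_one_lt (hα : 1 ≤ α) {a b c d : ℝ} (ha : 1 < a) (hab : a ≤ b)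
    (hac : a ≤ c) (h : (b - 1) * (c - 1) < (a - 1) * (d - 1)) :
    (b ^ α - 1) * (c ^ α - 1) < (a ^ α - 1) * (d ^ α - 1) := by
  have ha1 : 0 < a - 1 := sub_pos.mpr ha
  have hα0 : 0 < α := by linarith
  set ρ := (b - 1) / (a - 1)
  have hρ : 1 ≤ ρ := (one_le_div ha1).mpr (by linarith)
  have hρa : ρ * (a - 1) = b - 1 := div_mul_cancel₀ _ ha1.ne'
  have hratio := monotoneOn_one_add_mul_rpow_sub_one_div hα hρ (a := a - 1) (b := c - 1) ha1
    (Set.mem_Ioi.mpr (by linarith)) (by linarith)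
  have hposa := one_add_rpow_sub_one_pos hα0 ha1
  have hposc := one_add_rpow_sub_one_pos hα0 (by linarith : 0 < c - 1)
  simp only [hρa, add_sub_cancel] at hratio hposa hposc
  rw [div_le_div_iff₀ hposa hposc] at hratio
  have hd : 1 + ρ * (c - 1) < d := by
    refine lt_of_mul_lt_mul_left ?_ ha1.le
    linear_combination h + (c - 1) * hρa
  have hd_rpow : (1 + ρ * (c - 1)) ^ α < d ^ α :=
    Real.rpow_lt_rpow (by nlinarith) hd hα0
  calc (b ^ α - 1) * (c ^ α - 1) ≤ ((1 + ρ * (c - 1)) ^ α - 1) * (a ^ α - 1) := hratio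
    _ < (d ^ α - 1) * (a ^ α - 1) := by gcongr
    _ = (a ^ α - 1) * (d ^ α - 1) := mul_comm _ _

end PowerInequalities

section CornerRatio

variable {m n : ℕ}

/-- The `(i, j)` entry of the matrix obtained from `A` by scaling its rows and columns so that the
first row and the first column become constant equal to `1`. -/
noncomputable def cornerRatio (A : Matrix (Fin (m + 1)) (Fin (n + 1)) ℝ) (i : Fin (m + 1))
    (j : Fin (n + 1)) : ℝ :=
  A i j * A 0 0 / (A i 0 * A 0 j)

theorem cornerRatio_transpose (A : Matrix (Fin (m + 1)) (Fin (n + 1)) ℝ) (i : Fin (n + 1))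
    (j : Fin (m + 1)) : cornerRatio Aᵀ i j = cornerRatio A j i := by
  simp [cornerRatio, mul_comm]

theorem cornerRatio_map_rpow {A : Matrix (Fin (m + 1)) (Fin (n + 1)) ℝ} (hA : ∀ i j, 0 ≤ A i j)
    (α : ℝ) (i : Fin (m + 1)) (j : Fin (n + 1)) :
    cornerRatio (A.map (· ^ α)) i j = cornerRatio A i j ^ α := by
  simp only [cornerRatio, map_apply]
  rw [Real.div_rpow (mul_nonneg (hA _ _) (hA _ _)) (mul_nonneg (hA _ _) (hA _ _)),
    Real.mul_rpow (hA _ _) (hA _ _), Real.mul_rpow (hA _ _) (hA _ _)]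

theorem det_fin_three_eq_cornerRatio {A : Matrix (Fin 3) (Fin 3) ℝ} (hA : ∀ i j, A i j ≠ 0) :
    A.det = A 1 0 * A 2 0 * A 0 1 * A 0 2 / A 0 0 *
      ((cornerRatio A 1 1 - 1) * (cornerRatio A 2 2 - 1) -
        (cornerRatio A 1 2 - 1) * (cornerRatio A 2 1 - 1)) := by
  have := hA 0 0
  have := hA 0 1
  have := hA 0 2
  have := hA 1 0
  have := hA 2 0
  rw [det_fin_three]
  simp only [cornerRatio]
  field_simp
  ring

end CornerRatio

namespace IsTPMat

variable {m n : ℕ}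

theorem mul_lt_mul {A : Matrix (Fin m) (Fin n) ℝ} (hA : IsTPMat A) {i i' : Fin m} {j j' : Fin n}
    (hi : i < i') (hj : j < j') : A i j' * A i' j < A i j * A i' j' := by
  have hminor := hA 2 ![i, i'] ![j, j'] (by simpa [Fin.strictMono_iff_lt_succ] using hi)
    (by simpa [Fin.strictMono_iff_lt_succ] using hj)
  rw [det_fin_two] at hminor
  simpa using hminor

theorem cornerRatio_strictMono {A : Matrix (Fin (m + 1)) (Fin (n + 1)) ℝ} (hA : IsTPMat A)
    {j : Fin (n + 1)} (hj : 0 < j) : StrictMono fun i ↦ cornerRatio A i j := fun i i' hi ↦ by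
  have hpos := hA.pos
  have hminor := mul_pos (mul_pos (hpos 0 0) (hpos 0 j)) (sub_pos.mpr (hA.mul_lt_mul hi hj))
  have := hpos i 0
  have := hpos i' 0
  have := hpos 0 j
  simp only [cornerRatio]
  rw [div_lt_div_iff₀ (by positivity) (by positivity)]
  linarith

theorem one_lt_cornerRatio {A : Matrix (Fin (m + 1)) (Fin (n + 1)) ℝ} (hA : IsTPMat A)
    {i : Fin (m + 1)} {j : Fin (n + 1)} (hi : 0 < i) (hj : 0 < j) : 1 < cornerRatio A i j := by
  have h : cornerRatio A 0 j = 1 := by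
    rw [cornerRatio, mul_comm, div_self (mul_pos (hA.pos _ _) (hA.pos _ _)).ne']
  exact h ▸ hA.cornerRatio_strictMono hj hi

variable {α : ℝ}

theorem map_rpow_fin_two {A : Matrix (Fin 2) (Fin 2) ℝ} (hA : IsTPMat A) (hα : 0 < α) :
    IsTPMat (A.map (· ^ α)) := by
  refine isTPMat_fin_two (fun i j ↦ Real.rpow_pos_of_pos (hA.pos i j) α) ?_
  simp only [map_apply, ← Real.mul_rpow (hA.pos _ _).le (hA.pos _ _).le]
  exact Real.rpow_lt_rpow (mul_pos (hA.pos _ _) (hA.pos _ _)).le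
    (hA.mul_lt_mul zero_lt_one zero_lt_one) hα

theorem det_map_rpow_fin_three_pos {A : Matrix (Fin 3) (Fin 3) ℝ} (hA : IsTPMat A)
    (hα : 1 ≤ α) : 0 < (A.map (· ^ α)).det := by
  have hscale {B : Matrix (Fin 3) (Fin 3) ℝ} (hB : ∀ i j, 0 < B i j) :
      0 < B 1 0 * B 2 0 * B 0 1 * B 0 2 / B 0 0 :=
    div_pos (mul_pos (mul_pos (mul_pos (hB _ _) (hB _ _)) (hB _ _)) (hB _ _)) (hB _ _)
  have hposα (i j) : 0 < A.map (· ^ α) i j := Real.rpow_pos_of_pos (hA.pos i j) α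
  have hdet := hA.det_pos
  rw [det_fin_three_eq_cornerRatio fun i j ↦ (hA.pos i j).ne'] at hdet
  have hlt := sub_pos.mp (pos_of_mul_pos_right hdet (hscale hA.pos).le)
  rw [det_fin_three_eq_cornerRatio fun i j ↦ (hposα i j).ne']
  simp only [cornerRatio_map_rpow fun i j ↦ (hA.pos i j).le]
  refine mul_pos (hscale hposα) (sub_pos.mpr ?_)
  refine rpow_sub_one_mul_rpow_sub_one_lt hα (hA.one_lt_cornerRatio one_pos one_pos) ?_ ?_ hlt
  · have := (hA.transpose.cornerRatio_strictMono (j := 1) one_pos) (show (1 : Fin 3) < 2 by decide)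
    simpa only [cornerRatio_transpose] using this.le
  · exact (hA.cornerRatio_strictMono one_pos (show (1 : Fin 3) < 2 by decide)).le

theorem map_rpow_fin_three {A : Matrix (Fin 3) (Fin 3) ℝ} (hA : IsTPMat A)
    (hα : 1 ≤ α) : IsTPMat (A.map (· ^ α)) := by
  refine isTPMat_of_det_pos (hA.det_map_rpow_fin_three_pos hα) fun k hk r c hr hc ↦ ?_
  have hsub := hA.submatrix hr hc
  interval_cases k
  · simp
  · simpa using Real.rpow_pos_of_pos (hA.pos _ _) α
  · exact (hsub.map_rpow_fin_two (by linarith)).det_pos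

end IsTPMat

section PositiveDefinite

variable {n : ℕ}

theorem posDef_of_isEmpty {ι : Type*} [IsEmpty ι] (A : Matrix ι ι ℝ) : A.PosDef :=
  let := Fintype.ofIsEmpty (α := ι)
  .of_dotProduct_mulVec_pos (Subsingleton.elim _ _) fun _ hx ↦ (hx (Subsingleton.elim _ _)).elim

theorem posSemidef_fin_one {A : Matrix (Fin 1) (Fin 1) ℝ} (hA : 0 ≤ A.det) : A.PosSemidef := by
  have hdiag : A = A.det • 1 := by
    ext i j
    fin_cases i, j
    simp
  exact hdiag ▸ PosSemidef.one.smul hA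

theorem posDef_of_det_pos {A : Matrix (Fin (n + 1)) (Fin (n + 1)) ℝ} (hA : A.IsSymm)
    (hsub : (A.submatrix Fin.castSucc Fin.castSucc).PosDef) (hdet : 0 < A.det) : A.PosDef := by
  let e : Fin n ⊕ Fin 1 ≃ Fin (n + 1) := finSumFinEquiv
  let P := A.submatrix Fin.castSucc Fin.castSucc
  let C := (A.submatrix e e).toBlocks₁₂
  let D := (A.submatrix e e).toBlocks₂₂
  have hblocks : A.submatrix e e = fromBlocks P C Cᴴ D := by
    conv_lhs => rw [← fromBlocks_toBlocks (A.submatrix e e)]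
    congr 1
    ext i j
    exact (hA.apply _ _).symm
  have hP : P.PosDef := hsub
  let := hP.isUnit.invertible
  have hschur : 0 < (D - Cᴴ * P⁻¹ * C).det := by
    rw [← det_submatrix_equiv_self e, hblocks, det_fromBlocks₁₁, invOf_eq_nonsing_inv] at hdet
    exact pos_of_mul_pos_right hdet hP.det_pos.le
  have hpsd : (A.submatrix e e).PosSemidef := by
    rw [hblocks, PosDef.fromBlocks₁₁ _ _ hP]
    exact posSemidef_fin_one hschur.le
  exact ((posSemidef_submatrix_equiv e).mp hpsd).posDef_iff_det_ne_zero.mpr hdet.ne'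

theorem IsTPMat.posDef {A : Matrix (Fin n) (Fin n) ℝ} (hA : IsTPMat A) (hsymm : A.IsSymm) :
    A.PosDef := by
  induction n with
  | zero => exact posDef_of_isEmpty A
  | succ n ih =>
    exact posDef_of_det_pos hsymm
      (ih (hA.submatrix Fin.strictMono_castSucc Fin.strictMono_castSucc) (hsymm.submatrix _))
      hA.det_pos

/-- The rank-one matrix subtracted from a symmetric matrix `A` when the first row and column of `A`
are eliminated with pivot `A 0 0`. -/
noncomputable def pivotPart (A : Matrix (Fin (n + 1)) (Fin (n + 1)) ℝ) :
    Matrix (Fin (n + 1)) (Fin (n + 1)) ℝ :=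
  of fun i j ↦ A i 0 * A j 0 / A 0 0

variable {A : Matrix (Fin (n + 1)) (Fin (n + 1)) ℝ}

theorem posSemidef_pivotPart (h00 : 0 ≤ A 0 0) : (pivotPart A).PosSemidef := by
  have h : pivotPart A = (A 0 0)⁻¹ • vecMulVec (fun i ↦ A i 0) (star fun i ↦ A i 0) := by
    ext i j
    simp [pivotPart, vecMulVec_apply, div_eq_inv_mul]
  exact h ▸ (posSemidef_vecMulVec_self_star _).smul (inv_nonneg.mpr h00)

theorem pivotPart_map_rpow (hA : ∀ i j, 0 ≤ A i j) (α : ℝ) :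
    pivotPart (A.map (· ^ α)) = (pivotPart A).map (· ^ α) := by
  ext i j
  simp [pivotPart, Real.div_rpow (mul_nonneg (hA i 0) (hA j 0)) (hA 0 0),
    Real.mul_rpow (hA i 0) (hA j 0)]

theorem sub_pivotPart_zero_row (hA : A.IsSymm) (h00 : A 0 0 ≠ 0) (j : Fin (n + 1)) :
    (A - pivotPart A) 0 j = 0 := by
  simp [pivotPart, mul_div_cancel_left₀ _ h00, hA.apply]

theorem sub_pivotPart_zero_col (h00 : A 0 0 ≠ 0) (i : Fin (n + 1)) :
    (A - pivotPart A) i 0 = 0 := by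
  simp [pivotPart, mul_div_cancel_right₀ _ h00]

theorem posDef_sub_pivotPart (hA : A.PosDef) :
    ((A - pivotPart A).submatrix Fin.succ Fin.succ).PosDef := by
  have h00 : 0 < A 0 0 := hA.diag_pos
  let B : Matrix (Fin (n + 1)) (Fin n) ℝ :=
    of (Fin.cons (fun j ↦ -A j.succ 0 / A 0 0) fun i j ↦ if i = j then 1 else 0)
  have hB : Function.Injective B.mulVec := fun x y hxy ↦ by
    ext i
    simpa [B, Matrix.mulVec, dotProduct] using congrFun hxy i.succ
  convert hA.conjTranspose_mul_mul_same hB using 1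
  ext i j
  have hsymm (j : Fin n) : A 0 j.succ = A j.succ 0 := hA.isHermitian.apply _ _
  simp [pivotPart, B, Matrix.mul_apply, Fin.sum_univ_succ, hsymm]
  field_simp
  ring

theorem dotProduct_hadamard_mulVec_pos {D N : Matrix (Fin (n + 1)) (Fin (n + 1)) ℝ}
    (hrow : ∀ j, D 0 j = 0) (hcol : ∀ i, D i 0 = 0)
    (hD : (D.submatrix Fin.succ Fin.succ).PosDef) (hN : (N.submatrix Fin.succ Fin.succ).PosDef)
    {x : Fin (n + 1) → ℝ} (hx : Fin.tail x ≠ 0) : 0 < x ⬝ᵥ ((D ⊙ N) *ᵥ x) := by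
  have h : x ⬝ᵥ ((D ⊙ N) *ᵥ x) = Fin.tail x ⬝ᵥ
      ((D.submatrix Fin.succ Fin.succ ⊙ N.submatrix Fin.succ Fin.succ) *ᵥ Fin.tail x) := by
    simp [dotProduct, mulVec, Fin.sum_univ_succ, hrow, hcol, Fin.tail]
  exact h ▸ (hD.hadamard hN).dotProduct_mulVec_pos hx

theorem hasDerivAt_dotProduct_map_rpow_mulVec {ι : Type*} [Fintype ι] {P D : Matrix ι ι ℝ} {t : ℝ}
    (hpos : ∀ i j, 0 < (P + t • D) i j) (α : ℝ) (x : ι → ℝ) :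
    HasDerivAt (fun t : ℝ ↦ x ⬝ᵥ ((P + t • D).map (· ^ α) *ᵥ x))
      (α * (x ⬝ᵥ ((D ⊙ (P + t • D).map (· ^ (α - 1))) *ᵥ x))) t := by
  have hentry (i j : ι) : HasDerivAt (fun t : ℝ ↦ (P i j + t * D i j) ^ α)
      (α * (D i j * (P i j + t * D i j) ^ (α - 1))) t := by
    rw [mul_left_comm, ← mul_assoc]
    have hlin : HasDerivAt (fun t : ℝ ↦ P i j + t * D i j) (D i j) t := by
      simpa using ((hasDerivAt_id t).mul_const (D i j)).const_add (P i j)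
    exact hlin.rpow_const (Or.inl (hpos i j).ne')
  refine (HasDerivAt.fun_sum fun i _ ↦ (HasDerivAt.fun_sum fun j _ ↦
    (hentry i j).mul_const (x j)).const_mul (x i)).congr_deriv ?_
  simp only [dotProduct, mulVec, hadamard_apply, map_apply, Matrix.add_apply, Matrix.smul_apply,
    smul_eq_mul, mul_assoc, Finset.mul_sum, mul_left_comm α]

theorem posDef_submatrix_pivotPart_add (hA : A.PosDef) {t : ℝ} (ht : 0 < t) :
    ((pivotPart A + t • (A - pivotPart A)).submatrix Fin.succ Fin.succ).PosDef :=
  PosDef.posSemidef_add ((posSemidef_pivotPart hA.diag_pos.le).submatrix _)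
    ((posDef_sub_pivotPart hA).smul ht)

theorem pivotPart_add_pos (hpos : ∀ i j, 0 < A i j) {t : ℝ}
    (ht : t ∈ Set.Icc 0 1) (i j : Fin (n + 1)) :
    0 < (pivotPart A + t • (A - pivotPart A)) i j := by
  have hP : 0 < pivotPart A i j :=
    div_pos (mul_pos (hpos _ _) (hpos _ _)) (hpos _ _)
  exact (convex_Ioi (0 : ℝ)).add_smul_sub_mem hP (hpos i j) ht

theorem dotProduct_map_rpow_mulVec_pos_of_tail_ne_zero {α : ℝ} (hα : 0 < α)
    (ih : ∀ {B : Matrix (Fin n) (Fin n) ℝ}, B.PosDef → (∀ i j, 0 < B i j) →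
      (B.map (· ^ (α - 1))).PosDef)
    (hA : A.PosDef) (hpos : ∀ i j, 0 < A i j) {x : Fin (n + 1) → ℝ} (hx : Fin.tail x ≠ 0) :
    0 < x ⬝ᵥ (A.map (· ^ α) *ᵥ x) := by
  set P := pivotPart A
  have h00 : A 0 0 ≠ 0 := (hpos 0 0).ne'
  have hderiv (t : ℝ) (ht : t ∈ Set.Icc 0 1) :=
    hasDerivAt_dotProduct_map_rpow_mulVec (pivotPart_add_pos hpos ht) α x
  have hderiv_pos (t : ℝ) (ht : t ∈ Set.Ioo 0 1) :
      0 < α * (x ⬝ᵥ (((A - P) ⊙ (P + t • (A - P)).map (· ^ (α - 1))) *ᵥ x)) :=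
    have hpow : (((P + t • (A - P)).map (· ^ (α - 1))).submatrix Fin.succ Fin.succ).PosDef :=
      ih (posDef_submatrix_pivotPart_add hA ht.1) fun i j ↦
        pivotPart_add_pos hpos (Set.Ioo_subset_Icc_self ht) i.succ j.succ
    have hsymm : A.IsSymm := hA.isHermitian
    mul_pos hα <| dotProduct_hadamard_mulVec_pos (sub_pivotPart_zero_row hsymm h00)
      (sub_pivotPart_zero_col h00) (posDef_sub_pivotPart hA) hpow hx
  have hmono : StrictMonoOn (fun t : ℝ ↦ x ⬝ᵥ ((P + t • (A - P)).map (· ^ α) *ᵥ x))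
      (Set.Icc 0 1) :=
    strictMonoOn_of_deriv_pos (convex_Icc 0 1)
      (fun t ht ↦ (hderiv t ht).continuousAt.continuousWithinAt) fun t ht ↦ by
        rw [interior_Icc] at ht
        rw [(hderiv t (Set.Ioo_subset_Icc_self ht)).deriv]
        exact hderiv_pos t ht
  have hlt := hmono (Set.left_mem_Icc.mpr zero_le_one) (Set.right_mem_Icc.mpr zero_le_one) one_pos
  simp only [zero_smul, add_zero, one_smul, add_sub_cancel] at hlt
  rw [← pivotPart_map_rpow fun i j ↦ (hpos i j).le] at hlt
  exact ((posSemidef_pivotPart (Real.rpow_pos_of_pos (hpos 0 0) α).le).dotProduct_mulVec_nonneg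
    x).trans_lt hlt

theorem posDef_map_rpow {A : Matrix (Fin n) (Fin n) ℝ} (hA : A.PosDef) (hpos : ∀ i j, 0 < A i j)
    {α : ℝ} (hα : (n : ℝ) - 2 < α) : (A.map (· ^ α)).PosDef := by
  induction n generalizing α with
  | zero => exact posDef_of_isEmpty _
  | succ n ih =>
    push_cast at hα
    refine .of_dotProduct_mulVec_pos (hA.isHermitian.map _ fun _ ↦ rfl) fun x hx ↦ ?_
    by_cases htail : Fin.tail x = 0
    · have hx0 : x 0 ≠ 0 := fun h ↦ hx (funext (Fin.cases h (congrFun htail)))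
      have hsucc (i : Fin n) : x i.succ = 0 := congrFun htail i
      have h00 : 0 < A 0 0 ^ α := Real.rpow_pos_of_pos (hpos 0 0) α
      have hval : star x ⬝ᵥ (A.map (· ^ α) *ᵥ x) = x 0 ^ 2 * A 0 0 ^ α := by
        simp [dotProduct, mulVec, Fin.sum_univ_succ, hsucc]
        ring
      rw [hval]
      positivity
    · have hn : 1 ≤ n := Nat.one_le_iff_ne_zero.mpr fun h ↦ by
        subst h; exact htail (Subsingleton.elim _ _)
      have hn' : (1 : ℝ) ≤ n := by exact_mod_cast hn
      exact dotProduct_map_rpow_mulVec_pos_of_tail_ne_zero (by linarith)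
        (fun hB hB' ↦ ih hB hB' (by linarith)) hA hpos htail

end PositiveDefinite

namespace IsTPMat

theorem det_map_rpow_fin_four_pos {A : Matrix (Fin 4) (Fin 4) ℝ} (hA : IsTPMat A)
    (hsymm : A.IsSymm) {α : ℝ} (hα : 2 ≤ α) : 0 < (A.map (· ^ α)).det := by
  rcases hα.eq_or_lt with rfl | hα
  · have hsq : A.map (· ^ (2 : ℝ)) = A ⊙ A := by
      ext i j
      rw [map_apply, hadamard_apply, Real.rpow_two, sq]
    rw [hsq]
    exact ((hA.posDef hsymm).hadamard (hA.posDef hsymm)).det_pos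
  · exact (posDef_map_rpow (hA.posDef hsymm) hA.pos (by norm_num; exact hα)).det_pos

theorem map_rpow_fin_four {A : Matrix (Fin 4) (Fin 4) ℝ} (hA : IsTPMat A) (hsymm : A.IsSymm)
    {α : ℝ} (hα : 2 ≤ α) : IsTPMat (A.map (· ^ α)) := by
  refine isTPMat_of_det_pos (hA.det_map_rpow_fin_four_pos hsymm hα) fun k hk r c hr hc ↦ ?_
  have hsub := hA.submatrix hr hc
  interval_cases k
  · simp
  · simpa using Real.rpow_pos_of_pos (hA.pos _ _) α
  · exact (hsub.map_rpow_fin_two (by linarith)).det_pos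
  · exact (hsub.map_rpow_fin_three (by linarith)).det_pos

end IsTPMat

section Classification

variable {F : ℝ → ℝ} {d : ℕ} {α : ℝ}

theorem preservesSymmTP_one_iff : PreservesSymmTP F 1 ↔ ∀ x, 0 < x → 0 < F x :=
  ⟨fun h _ hx ↦ h.pos hx, fun h _ _ hA ↦ isTPMat_fin_one (h _ (hA.pos 0 0))⟩

theorem IsTPMat.map_fin_two {A : Matrix (Fin 2) (Fin 2) ℝ} (hA : IsTPMat A) (hsymm : A.IsSymm)
    (hpos : ∀ x, 0 < x → 0 < F x) (hmono : StrictMonoOn F (Set.Ioi 0))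
    (hmid : ∀ x y, 0 < x → 0 < y → F √(x * y) ^ 2 ≤ F x * F y) : IsTPMat (A.map F) := by
  refine isTPMat_fin_two (fun i j ↦ hpos _ (hA.pos i j)) ?_
  have hsymm01 : A 1 0 = A 0 1 := hsymm.apply 0 1
  have hlt : A 0 1 < √(A 0 0 * A 1 1) := by
    refine Real.lt_sqrt_of_sq_lt ?_
    simpa only [hsymm01, ← sq] using hA.mul_lt_mul zero_lt_one zero_lt_one
  have h01 := hA.pos 0 1
  calc F (A 0 1) * F (A 1 0) = F (A 0 1) ^ 2 := by rw [hsymm01, sq]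
    _ < F √(A 0 0 * A 1 1) ^ 2 :=
      pow_lt_pow_left₀ (hmono h01 (h01.trans hlt) hlt) (hpos _ h01).le two_ne_zero
    _ ≤ F (A 0 0) * F (A 1 1) := hmid _ _ (hA.pos _ _) (hA.pos _ _)

theorem preservesSymmTP_two_iff : PreservesSymmTP F 2 ↔
    (∀ x, 0 < x → 0 < F x) ∧ StrictMonoOn F (Set.Ioi 0) ∧
      ∀ x y, 0 < x → 0 < y → F √(x * y) ^ 2 ≤ F x * F y :=
  ⟨fun h ↦ ⟨fun _ hx ↦ h.of_succ.pos hx, h.strictMonoOn, fun _ _ ↦ h.sq_sqrt_mul_le⟩,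
    fun ⟨hpos, hmono, hmid⟩ _ hsymm hA ↦ hA.map_fin_two hsymm hpos hmono hmid⟩

theorem preservesSymmTP_rpow_one (d : ℕ) : PreservesSymmTP (· ^ (1 : ℝ)) d := fun _ _ hA ↦ by
  simpa only [Real.rpow_one, Matrix.map_id'] using hA

theorem preservesSymmTP_rpow_three_iff : PreservesSymmTP (· ^ α) 3 ↔ 1 ≤ α :=
  ⟨fun h ↦ h.one_le_of_rpow_three, fun hα _ _ hA ↦ hA.map_rpow_fin_three hα⟩

theorem preservesSymmTP_rpow_four_iff : PreservesSymmTP (· ^ α) 4 ↔ α = 1 ∨ 2 ≤ α := by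
  refine ⟨fun h ↦ ?_, ?_⟩
  · exact h.of_succ.one_le_of_rpow_three.eq_or_lt.imp Eq.symm h.two_le_of_rpow_four
  · rintro (rfl | hα)
    · exact preservesSymmTP_rpow_one 4
    · exact fun _ hsymm hA ↦ hA.map_rpow_fin_four hsymm hα

theorem preservesSymmTP_rpow_iff_eq_one (hd : 5 ≤ d) : PreservesSymmTP (· ^ α) d ↔ α = 1 := by
  refine ⟨fun h ↦ ?_, fun hα ↦ hα ▸ preservesSymmTP_rpow_one d⟩
  exact (h.mono hd).le_one_of_rpow_five.antisymm (h.mono (by lia)).one_le_of_rpow_three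

theorem preservesSymmTP_iff_exists_rpow (hd : 3 ≤ d) : PreservesSymmTP F d ↔
    ∃ c : ℝ, 0 < c ∧ ∃ α : ℝ, PreservesSymmTP (· ^ α) d ∧ ∀ x, 0 < x → F x = c * x ^ α := by
  constructor
  · intro h
    obtain ⟨c, hc, α, hF⟩ := (h.mono hd).exists_eq_mul_rpow
    exact ⟨c, hc, α, (preservesSymmTP_const_mul_rpow_iff hc hF).mp h, hF⟩
  · rintro ⟨c, hc, α, hα, hF⟩
    exact (preservesSymmTP_const_mul_rpow_iff hc hF).mpr hα

end Classification

end SymmetricTotalPositivity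

theorem stmt_8 (F : ℝ → ℝ) (d : ℕ) (hd : 0 < d) :
    (∀ A : Matrix (Fin d) (Fin d) ℝ, A.IsSymm → IsTPMat A → IsTPMat (A.map F)) ↔
      ((d = 1 ∧ ∀ x : ℝ, 0 < x → 0 < F x) ∨
       (d = 2 ∧ (∀ x : ℝ, 0 < x → 0 < F x) ∧ StrictMonoOn F (Set.Ioi 0) ∧
         ∀ x y : ℝ, 0 < x → 0 < y → F (Real.sqrt (x * y)) ^ 2 ≤ F x * F y) ∨
       (d = 3 ∧ ∃ c : ℝ, 0 < c ∧ ∃ α : ℝ, 1 ≤ α ∧ ∀ x : ℝ, 0 < x → F x = c * x ^ α) ∨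
       (d = 4 ∧ ∃ c : ℝ, 0 < c ∧ ∃ α : ℝ, (α = 1 ∨ 2 ≤ α) ∧
         ∀ x : ℝ, 0 < x → F x = c * x ^ α) ∨
       (5 ≤ d ∧ ∃ c : ℝ, 0 < c ∧ ∀ x : ℝ, 0 < x → F x = c * x)) := by
  change PreservesSymmTP F d ↔ _
  obtain rfl | rfl | rfl | rfl | h5 : d = 1 ∨ d = 2 ∨ d = 3 ∨ d = 4 ∨ 5 ≤ d := by lia
  · simp [preservesSymmTP_one_iff]
  · simp [preservesSymmTP_two_iff]
  · rw [preservesSymmTP_iff_exists_rpow le_rfl]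
    simp [preservesSymmTP_rpow_three_iff]
  · rw [preservesSymmTP_iff_exists_rpow (by lia)]
    simp [preservesSymmTP_rpow_four_iff]
  · have hd : d ≠ 1 ∧ d ≠ 2 ∧ d ≠ 3 ∧ d ≠ 4 := by lia
    rw [preservesSymmTP_iff_exists_rpow (by lia)]
    simp [hd, h5, preservesSymmTP_rpow_iff_eq_one h5]
end

section
/- The function M : ℝ → ℝ defined by M(x) = 2·e^{−|x|} − e^{−2|x|} is a Pólya frequency function that is even, continuous, and nowhere zero, is increasing on (−∞,0] and decreasing on [0,∞), and has the property that for every integer n ≥ 2 the n-th power x ↦ M(x)^n is NOT a Pólya frequency function. -/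
/-- A kernel on linearly ordered sets is totally non-negative if all matrices
obtained by evaluating it on increasing tuples have non-negative determinant. -/
def IsTNKernel {X Y : Type*} [LinearOrder X] [LinearOrder Y] (K : X → Y → ℝ) : Prop :=
  ∀ (n : ℕ) (x : Fin n → X) (y : Fin n → Y), StrictMono x → StrictMono y →
    0 ≤ (Matrix.of fun i j : Fin n => K (x i) (y j)).det

/-- A Pólya frequency function: a Lebesgue-integrable function `ℝ → [0,∞)`,
non-zero at two or more points, whose associated Toeplitz kernel is totally
non-negative. -/
def IsPolyaFrequencyFunction (Λ : ℝ → ℝ) : Prop :=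
  MeasureTheory.Integrable Λ ∧ (∀ x, 0 ≤ Λ x) ∧
  (∃ a b : ℝ, a ≠ b ∧ Λ a ≠ 0 ∧ Λ b ≠ 0) ∧
  IsTNKernel fun x y : ℝ => Λ (x - y)

/-!
With `c = 12` we have `M (x - y) = c * ∫ t, H (x, t) * H (y, t)`, where `H` is the composition of
the one-sided exponential kernels of rates `1` and `2`. These are rescalings of the indicator of
`y ≤ x`, and Andréief's identity shows that composition preserves total non-negativity.

For the powers, put `s = exp x` and `t = exp y`: the kernel `M (x - y) ^ n` becomes, up to positive
row and column factors, a kernel `K` which equals `(2 * s - t) ^ n` for `t ≤ s`. That polynomial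
has rank `n + 1`. Take an `m × m` minor of `K` with all `s i < t j`, and border it by `n + 1`
columns to the left and `n + 1` rows below: on the three new blocks `K` is the polynomial, so the
Schur complement turns total non-negativity of the bordered minor into
`0 ≤ (-1) ^ (m * (n + 1)) * det (K (s i) (t j) - (2 * s i - t j) ^ n)`.
A `1 × 1` minor violates this for even `n`, and a `2 × 2` minor for odd `n ≥ 3`.
-/

open MeasureTheory Matrix Real

open scoped Nat

section Andreief

variable {ι α 𝕜 : Type*} [Fintype ι] [DecidableEq ι] [MeasurableSpace α] [RCLike 𝕜]

theorem sum_sum_sign_mul_prod_eq_factorial_mul_det {R : Type*} [CommRing R] (A : Matrix ι ι R) :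
    ∑ σ : Equiv.Perm ι, ∑ τ : Equiv.Perm ι,
        ((σ.sign : ℤ) : R) * ((τ.sign : ℤ) : R) * ∏ i, A (σ i) (τ i) =
      (Fintype.card ι)! * A.det := by
  have sum_eq_det (τ : Equiv.Perm ι) :
      ∑ σ : Equiv.Perm ι, ((σ.sign : ℤ) : R) * ((τ.sign : ℤ) : R) * ∏ i, A (σ i) (τ i) = A.det :=
    calc
      _ = ((τ.sign : ℤ) : R) * (A.submatrix id τ).det := by
        rw [det_apply', Finset.mul_sum]
        exact Finset.sum_congr rfl fun σ _ => by simp only [submatrix_apply, id_eq]; ring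
      _ = A.det := by
        rw [det_permute', ← mul_assoc, ← Int.cast_mul, Int.units_coe_mul_self, Int.cast_one,
          one_mul]
  rw [Finset.sum_comm, Finset.sum_congr rfl fun τ _ => sum_eq_det τ, Finset.sum_const,
    Finset.card_univ, Fintype.card_perm, nsmul_eq_mul]

theorem integral_det_mul_det_eq_factorial_mul_det {μ : Measure α} [SigmaFinite μ]
    {f g : ι → α → 𝕜} (hfg : ∀ i j, Integrable (fun t => f i t * g j t) μ) :
    ∫ t : ι → α, (of fun i k => f i (t k)).det * (of fun i k => g i (t k)).det
        ∂Measure.pi (fun _ => μ) =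
      (Fintype.card ι)! * (of fun i j => ∫ t, f i t * g j t ∂μ).det := by
  have expand (t : ι → α) :
      (of fun i k => f i (t k)).det * (of fun i k => g i (t k)).det =
        ∑ σ : Equiv.Perm ι, ∑ τ : Equiv.Perm ι, ((σ.sign : ℤ) : 𝕜) * ((τ.sign : ℤ) : 𝕜) *
          ∏ i, (f (σ i) (t i) * g (τ i) (t i)) := by
    simp only [det_apply', Finset.sum_mul_sum, of_apply, Finset.prod_mul_distrib, mul_mul_mul_comm]
  have integrable_term (σ τ : Equiv.Perm ι) :
      Integrable (fun t : ι → α => ((σ.sign : ℤ) : 𝕜) * ((τ.sign : ℤ) : 𝕜) *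
        ∏ i, (f (σ i) (t i) * g (τ i) (t i))) (Measure.pi fun _ => μ) :=
    (Integrable.fintype_prod fun i => hfg (σ i) (τ i)).const_mul _
  simp_rw [expand]
  rw [integral_finsetSum _ fun σ _ => integrable_finsetSum _ fun τ _ => integrable_term σ τ,
    ← sum_sum_sign_mul_prod_eq_factorial_mul_det]
  refine Finset.sum_congr rfl fun σ _ => ?_
  rw [integral_finsetSum _ fun τ _ => integrable_term σ τ]
  refine Finset.sum_congr rfl fun τ _ => ?_
  rw [integral_const_mul, integral_fintype_prod_eq_prod fun i t => f (σ i) t * g (τ i) t]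
  rfl

end Andreief

namespace IsTNKernel

variable {X Y Z X' Y' : Type*} [LinearOrder X] [LinearOrder Y] [LinearOrder Z] [LinearOrder X']
  [LinearOrder Y'] {K : X → Y → ℝ} {L : Y → Z → ℝ}

theorem swap (hK : IsTNKernel K) : IsTNKernel fun y x => K x y := fun n y x hy hx => by
  simpa only [← det_transpose (of fun i j => K (x i) (y j))] using! hK n x y hx hy

theorem comp (hK : IsTNKernel K) {f : X' → X} {g : Y' → Y} (hf : StrictMono f)
    (hg : StrictMono g) : IsTNKernel fun x y => K (f x) (g y) := fun n x y hx hy =>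
  hK n (f ∘ x) (g ∘ y) (hf.comp hx) (hg.comp hy)

theorem mul_mul (hK : IsTNKernel K) {p : X → ℝ} {q : Y → ℝ} (hp : ∀ x, 0 ≤ p x)
    (hq : ∀ y, 0 ≤ q y) : IsTNKernel fun x y => p x * (q y * K x y) := fun n x y hx hy => by
  have hdet : (of fun i j => p (x i) * (q (y j) * K (x i) (y j))).det =
      (∏ i, p (x i)) * ((∏ j, q (y j)) * (of fun i j => K (x i) (y j)).det) :=
    (det_mul_column (fun i => p (x i)) (of fun i j => q (y j) * K (x i) (y j))).trans
      (congrArg _ (det_mul_row (fun j => q (y j)) (of fun i j => K (x i) (y j))))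
  exact hdet ▸ mul_nonneg (Finset.prod_nonneg fun i _ => hp (x i))
    (mul_nonneg (Finset.prod_nonneg fun j _ => hq (y j)) (hK n x y hx hy))

-- Sorting `y` changes both determinants by the same sign.
theorem det_mul_det_nonneg (hK : IsTNKernel K) (hL : IsTNKernel L) {n : ℕ} {x : Fin n → X}
    {z : Fin n → Z} (hx : StrictMono x) (hz : StrictMono z) (y : Fin n → Y) :
    0 ≤ (of fun i k => K (x i) (y k)).det * (of fun j k => L (y k) (z j)).det := by
  by_cases hy : Function.Injective y
  · set σ := Tuple.sort y
    have hσ : StrictMono (y ∘ σ) :=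
      (Tuple.monotone_sort y).strictMono_of_injective (hy.comp σ.injective)
    have sorted := mul_nonneg (hK n x (y ∘ σ) hx hσ) (hL.swap n z (y ∘ σ) hz hσ)
    have hKσ := det_permute' σ (of fun i k => K (x i) (y k))
    have hLσ := det_permute' σ (of fun j k => L (y k) (z j))
    calc
      0 ≤ _ := sorted
      _ = (((σ.sign : ℤ) : ℝ) * ((σ.sign : ℤ) : ℝ)) * _ :=
        (congrArg₂ (· * ·) hKσ hLσ).trans (mul_mul_mul_comm _ _ _ _)
      _ = _ := by rw [← Int.cast_mul, Int.units_coe_mul_self, Int.cast_one, one_mul]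
  · obtain ⟨k, l, hkl, hne⟩ := Function.not_injective_iff.1 hy
    rw [det_zero_of_column_eq hne fun i => by simp only [of_apply, hkl], zero_mul]

theorem integral_mul [MeasurableSpace Y] {μ : Measure Y} [SigmaFinite μ] (hK : IsTNKernel K)
    (hL : IsTNKernel L) (hKL : ∀ x z, Integrable (fun y => K x y * L y z) μ) :
    IsTNKernel fun x z => ∫ y, K x y * L y z ∂μ := fun n x z hx hz => by
  have andreief := integral_det_mul_det_eq_factorial_mul_det
    (f := fun i y => K (x i) y) (g := fun j y => L y (z j)) fun i j => hKL (x i) (z j)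
  refine nonneg_of_mul_nonneg_right (andreief ▸ ?_)
    (Nat.cast_pos.2 (Fintype.card (Fin n)).factorial_pos)
  exact integral_nonneg fun y => hK.det_mul_det_nonneg hL hx hz y

end IsTNKernel

theorem isTNKernel_ite_le (X : Type*) [LinearOrder X] :
    IsTNKernel fun x y : X => if y ≤ x then (1 : ℝ) else 0 := by
  intro n
  induction n with
  | zero => exact fun x y _ _ => by rw [det_fin_zero]; exact zero_le_one
  | succ n ih =>
    intro x y hx hy
    by_cases h₀ : y 0 ≤ x 0
    · by_cases h₁ : ∃ j : Fin n, y j.succ ≤ x 0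
      · obtain ⟨j, hj⟩ := h₁
        refine (det_zero_of_column_eq (Fin.succ_ne_zero j) fun i => ?_).ge
        have hxi : x 0 ≤ x i := hx.monotone (Fin.zero_le i)
        simp only [of_apply, h₀.trans hxi, hj.trans hxi]
      · rw [not_exists] at h₁
        have tail := ih (x ∘ Fin.succ) (y ∘ Fin.succ) (hx.comp Fin.strictMono_succ)
          (hy.comp Fin.strictMono_succ)
        rw [det_succ_row_zero, Fin.sum_univ_succ]
        simpa [h₀, h₁] using! tail
    · refine (det_eq_zero_of_row_eq_zero 0 fun j => if_neg fun h => h₀ ?_).ge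
      exact (hy.monotone (Fin.zero_le j)).trans h

section DetAppend

variable {m r : ℕ} {R : Type*} [CommRing R]

theorem strictMono_append {X : Type*} [Preorder X] {x : Fin m → X} {x' : Fin r → X}
    (hx : StrictMono x) (hx' : StrictMono x') (hlt : ∀ i j, x i < x' j) :
    StrictMono (Fin.append x x') := by
  intro i j
  refine Fin.addCases (fun i => ?_) (fun i => ?_) i <;>
    refine Fin.addCases (fun j => ?_) (fun j => ?_) j <;> intro hij
  · simpa only [Fin.append_left] using hx ((Fin.strictMono_castAdd r).lt_iff_lt.1 hij)
  · simpa only [Fin.append_left, Fin.append_right] using hlt i j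
  · rw [Fin.lt_def, Fin.val_natAdd, Fin.val_castAdd] at hij
    omega
  · simpa only [Fin.append_right] using hx' (by simpa using hij)

theorem val_finRotate_pow (N k : ℕ) (i : Fin N) : ((finRotate N ^ k) i : ℕ) = (i + k) % N := by
  have := i.neZero
  induction k with
  | zero => simp [Nat.mod_eq_of_lt i.2]
  | succ k ih =>
    rw [pow_succ', Equiv.Perm.mul_apply, finRotate_apply, Fin.val_add, ih, Fin.val_one',
      ← Nat.add_mod, add_assoc]

theorem sign_finRotate_add_pow (m r : ℕ) :
    Equiv.Perm.sign (finRotate (m + r) ^ r) = (-1) ^ (m * r) := by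
  cases r with
  | zero => simp
  | succ r =>
    rw [map_pow, sign_finRotate, ← pow_mul, ← add_assoc, Nat.add_sub_cancel, add_mul, pow_add,
      (Nat.even_mul_succ_self r).neg_one_pow, mul_one]

theorem det_of_append_append {X Y : Type*} (F : X → Y → R) (x : Fin m → X) (x' : Fin r → X)
    (y' : Fin r → Y) (y : Fin m → Y) :
    (of fun i j : Fin (m + r) => F (Fin.append x x' i)
        (Fin.append y' y (Fin.cast (Nat.add_comm m r) j))).det =
      (-1) ^ (m * r) *
        (fromBlocks (of fun i j => F (x i) (y j)) (of fun i j => F (x i) (y' j))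
          (of fun i j => F (x' i) (y j)) (of fun i j => F (x' i) (y' j))).det := by
  set A : Matrix (Fin (m + r)) (Fin (m + r)) R := of fun i j =>
    F (Fin.append x x' i) (Fin.append y' y (Fin.cast (Nat.add_comm m r) j))
  set ρ := finRotate (m + r) ^ r
  have rotate_castAdd (j : Fin m) :
      Fin.cast (Nat.add_comm m r) (ρ (Fin.castAdd r j)) = Fin.natAdd r j := Fin.ext <| by
    rw [Fin.val_cast, val_finRotate_pow, Fin.val_castAdd, Fin.val_natAdd, add_comm (j : ℕ),
      Nat.mod_eq_of_lt (by omega)]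
  have rotate_natAdd (j : Fin r) :
      Fin.cast (Nat.add_comm m r) (ρ (Fin.natAdd m j)) = Fin.castAdd m j := Fin.ext <| by
    rw [Fin.val_cast, val_finRotate_pow, Fin.val_natAdd, Fin.val_castAdd,
      show m + (j : ℕ) + r = j + (m + r) by ring, Nat.add_mod_right, Nat.mod_eq_of_lt (by omega)]
  have hblocks : (A.submatrix id ρ).submatrix finSumFinEquiv finSumFinEquiv =
      fromBlocks (of fun i j => F (x i) (y j)) (of fun i j => F (x i) (y' j))
        (of fun i j => F (x' i) (y j)) (of fun i j => F (x' i) (y' j)) := by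
    ext (i | i) (j | j) <;> simp [A, rotate_castAdd, rotate_natAdd]
  have hsign : ((Equiv.Perm.sign ρ : ℤ) : R) = (-1) ^ (m * r) := by
    rw [sign_finRotate_add_pow]
    push_cast
    rfl
  rw [← hblocks, det_submatrix_equiv_self, det_permute', hsign, ← mul_assoc, ← mul_pow,
    neg_one_mul, neg_neg, one_pow, one_mul]

theorem det_fromBlocks_mul_mul {m r : Type*} [Fintype m] [DecidableEq m] [Fintype r] [DecidableEq r]
    (A : Matrix m m R) (U₁ : Matrix m r R) (U₂ : Matrix r r R) (V₁ : Matrix r m R)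
    (V₂ : Matrix r r R) :
    (fromBlocks A (U₁ * V₂) (U₂ * V₁) (U₂ * V₂)).det = (A - U₁ * V₁).det * (U₂ * V₂).det := by
  have factor : fromBlocks A (U₁ * V₂) (U₂ * V₁) (U₂ * V₂) =
      fromBlocks (A - U₁ * V₁) U₁ 0 U₂ * fromBlocks 1 0 V₁ V₂ := by
    simp [fromBlocks_multiply]
  rw [factor, det_mul, det_fromBlocks_zero₂₁, det_fromBlocks_zero₁₂, det_mul, det_one, one_mul,
    mul_assoc]

theorem det_of_add_pow_ne_zero {k : Type*} [Field k] [CharZero k] {n : ℕ} {a b : Fin (n + 1) → k}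
    (ha : Function.Injective a) (hb : Function.Injective b) :
    (of fun i j => (a i + b j) ^ n).det ≠ 0 := by
  have factor : (of fun i j => (a i + b j) ^ n) = vandermonde a *
      of fun (l : Fin (n + 1)) j => (n.choose l : k) * (projVandermonde 1 b)ᵀ l j := by
    ext i j
    simp only [of_apply, add_pow, mul_apply, vandermonde_apply, transpose_apply,
      projVandermonde_apply, ← Fin.sum_univ_eq_sum_range
        (fun l => a i ^ l * b j ^ (n - l) * (n.choose l : k))]
    refine Finset.sum_congr rfl fun l _ => ?_
    rw [Fin.val_rev, Nat.add_sub_add_right, Pi.one_apply, one_pow, one_mul]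
    ring
  have hproj : (projVandermonde 1 b).det ≠ 0 := by
    rw [det_projVandermonde]
    refine Finset.prod_ne_zero_iff.2 fun i _ => Finset.prod_ne_zero_iff.2 fun j hj => ?_
    simpa [sub_eq_zero] using hb.ne (Finset.mem_Ioi.1 hj).ne
  rw [factor, det_mul, det_mul_column, det_transpose]
  refine mul_ne_zero (det_vandermonde_ne_zero_iff.2 ha) (mul_ne_zero ?_ hproj)
  exact Finset.prod_ne_zero_iff.2 fun l _ => Nat.cast_ne_zero.2 (Nat.choose_pos l.is_le).ne'

end DetAppend

section Sequences

variable {X : Type*} [Preorder X]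

theorem exists_strictMono_forall_lt [NoMaxOrder X] (a : X) (n : ℕ) :
    ∃ z : Fin n → X, StrictMono z ∧ ∀ i, a < z i := by
  obtain ⟨z, hz⟩ := Nat.exists_strictMono (Set.Ioi a)
  exact ⟨fun i => z i, fun i j hij => hz hij, fun i => (z i).2⟩

theorem exists_strictMono_forall_gt [NoMinOrder X] (a : X) (n : ℕ) :
    ∃ z : Fin n → X, StrictMono z ∧ ∀ i, z i < a := by
  obtain ⟨z, hz⟩ := Nat.exists_strictAnti (Set.Iio a)
  exact ⟨fun i => z i.rev, fun i j hij => hz (Fin.rev_lt_rev.2 hij), fun i => (z i.rev).2⟩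

end Sequences

namespace IsTNKernel

variable {X Y : Type*} [LinearOrder X] [LinearOrder Y] {m : ℕ}

theorem neg_one_pow_mul_det_sub_nonneg {r : ℕ} {K : X → Y → ℝ} (hK : IsTNKernel K)
    {u : X → Fin r → ℝ} {v : Y → Fin r → ℝ} {x : Fin m → X} {x' : Fin r → X} {y : Fin m → Y}
    {y' : Fin r → Y} (hx : StrictMono (Fin.append x x')) (hy : StrictMono (Fin.append y' y))
    (hxy' : ∀ i j, K (x i) (y' j) = u (x i) ⬝ᵥ v (y' j))
    (hx'y : ∀ i j, K (x' i) (y j) = u (x' i) ⬝ᵥ v (y j))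
    (hx'y' : ∀ i j, K (x' i) (y' j) = u (x' i) ⬝ᵥ v (y' j))
    (hne : (of fun i j => u (x' i) ⬝ᵥ v (y' j)).det ≠ 0) :
    0 ≤ (-1) ^ (m * r) * (of fun i j => K (x i) (y j) - u (x i) ⬝ᵥ v (y j)).det := by
  have corner_pos : 0 < (of fun i j => u (x' i) ⬝ᵥ v (y' j)).det := by
    have hx' : StrictMono x' := fun i j hij => by
      simpa only [Fin.append_right] using hx ((Fin.strictMono_natAdd m).lt_iff_lt.2 hij)
    have hy' : StrictMono y' := fun i j hij => by
      simpa only [Fin.append_left] using hy ((Fin.strictMono_castAdd m).lt_iff_lt.2 hij)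
    exact ((hK r x' y' hx' hy').trans_eq (by simp only [hx'y'])).lt_of_ne' hne
  have bordered := hK (m + r) _ _ hx (hy.comp (Fin.cast_strictMono (Nat.add_comm m r)))
  have schur := det_fromBlocks_mul_mul (of fun i j => K (x i) (y j)) (of fun i => u (x i))
    (of fun i => u (x' i)) (of fun j => v (y j))ᵀ (of fun j => v (y' j))ᵀ
  have hdet : 0 ≤ (-1) ^ (m * r) *
      ((of fun i j => K (x i) (y j) - u (x i) ⬝ᵥ v (y j)).det *
        (of fun i j => u (x' i) ⬝ᵥ v (y' j)).det) := by
    refine bordered.trans_eq ((det_of_append_append K x x' y' y).trans ?_)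
    simp only [hxy', hx'y, hx'y']
    exact congrArg _ schur
  rw [← mul_assoc] at hdet
  exact nonneg_of_mul_nonneg_left hdet corner_pos

theorem neg_one_pow_mul_det_sub_add_pow_nonneg [Nonempty X] [NoMinOrder X] [NoMaxOrder X]
    {K : X → X → ℝ} (hK : IsTNKernel K) {n : ℕ} {f g : X → ℝ} (hf : Function.Injective f)
    (hg : Function.Injective g) (hKfg : ∀ s t, t ≤ s → K s t = (f s + g t) ^ n)
    {x y : Fin m → X} (hx : StrictMono x) (hy : StrictMono y) (hxy : ∀ i j, x i < y j) :
    0 ≤ (-1) ^ (m * (n + 1)) *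
      (of fun i j => K (x i) (y j) - (f (x i) + g (y j)) ^ n).det := by
  obtain ⟨hi, hhi⟩ := (Set.finite_range y).bddAbove
  obtain ⟨lo, hlo⟩ := ((Set.finite_range x).insert hi).bddBelow
  have y_le_hi (j) : y j ≤ hi := hhi (Set.mem_range_self j)
  have lo_le_hi : lo ≤ hi := hlo (Set.mem_insert hi _)
  have lo_le_x (i) : lo ≤ x i := hlo (Set.mem_insert_of_mem hi (Set.mem_range_self i))
  obtain ⟨x', hx', hi_lt_x'⟩ := exists_strictMono_forall_lt hi (n + 1)
  obtain ⟨y', hy', y'_lt_lo⟩ := exists_strictMono_forall_gt lo (n + 1)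
  let u (s : X) (l : Fin (n + 1)) : ℝ := f s ^ (l : ℕ)
  let v (t : X) (l : Fin (n + 1)) : ℝ := g t ^ (n - l) * n.choose l
  have add_pow_eq (s t : X) : (f s + g t) ^ n = u s ⬝ᵥ v t := by
    rw [add_pow, ← Fin.sum_univ_eq_sum_range (fun l => f s ^ l * g t ^ (n - l) * (n.choose l : ℝ))]
    exact Finset.sum_congr rfl fun l _ => mul_assoc _ _ _
  simp only [add_pow_eq] at hKfg ⊢
  have corner_ne : (of fun i j => u (x' i) ⬝ᵥ v (y' j)).det ≠ 0 := by
    simpa only [← add_pow_eq] using!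
      det_of_add_pow_ne_zero (hf.comp hx'.injective) (hg.comp hy'.injective)
  refine hK.neg_one_pow_mul_det_sub_nonneg (x' := x') (y' := y')
    (strictMono_append hx hx' fun i j => ?_) (strictMono_append hy' hy fun i j => ?_)
    (fun i j => hKfg _ _ ?_) (fun i j => hKfg _ _ ?_) (fun i j => hKfg _ _ ?_) corner_ne
  · exact (hxy i i).trans ((y_le_hi i).trans_lt (hi_lt_x' j))
  · exact (y'_lt_lo i).trans_le ((lo_le_x j).trans (hxy j j).le)
  · exact (y'_lt_lo j).le.trans (lo_le_x i)
  · exact (y_le_hi j).trans (hi_lt_x' i).le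
  · exact (y'_lt_lo j).le.trans (lo_le_hi.trans (hi_lt_x' i).le)

end IsTNKernel

section Biexp

variable {a b : ℝ}

/-- The Toeplitz kernel of the one-sided exponential `exp (-(a * x))`, `0 ≤ x`. -/
noncomputable def expKernel (a x y : ℝ) : ℝ := if y ≤ x then exp (-(a * (x - y))) else 0

/-- The Toeplitz kernel of the convolution of the one-sided exponentials of rates `a ≠ b`, which
is the density of the hypoexponential distribution divided by `a * b`. -/
noncomputable def hypoexpKernel (a b x y : ℝ) : ℝ :=
  if y ≤ x then (exp (-(a * (x - y))) - exp (-(b * (x - y)))) / (b - a) else 0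

/-- The difference of two-sided exponentials of rates `a` and `b`, weighted so that for `a ≠ b` it
is proportional to the autocorrelation of `hypoexpKernel a b`. -/
noncomputable def biexp (a b x : ℝ) : ℝ := b * exp (-(a * |x|)) - a * exp (-(b * |x|))

theorem biexp_neg (a b x : ℝ) : biexp a b (-x) = biexp a b x := by rw [biexp, biexp, abs_neg]

theorem isTNKernel_expKernel (a : ℝ) : IsTNKernel (expKernel a) := by
  have factor : expKernel a =
      fun x y => exp (-(a * x)) * (exp (a * y) * if y ≤ x then 1 else 0) := by
    ext x y
    rw [expKernel, mul_ite, mul_ite, mul_one, mul_zero, mul_zero, ← exp_add]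
    ring_nf
  exact factor ▸ (isTNKernel_ite_le ℝ).mul_mul (fun _ => (exp_pos _).le) fun _ => (exp_pos _).le

theorem expKernel_mul_expKernel (a b x y : ℝ) : (fun t => expKernel a x t * expKernel b t y) =
    (Set.Icc y x).indicator fun t => exp (b * y - a * x) * exp ((a - b) * t) := by
  ext t
  by_cases ht : t ∈ Set.Icc y x
  · rw [Set.indicator_of_mem ht, expKernel, expKernel, if_pos ht.2, if_pos ht.1, ← exp_add,
      ← exp_add]
    ring_nf
  · rw [Set.indicator_of_notMem ht, expKernel, expKernel]
    grind

theorem integrable_expKernel_mul_expKernel (a b x y : ℝ) :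
    Integrable fun t => expKernel a x t * expKernel b t y := by
  rw [expKernel_mul_expKernel, integrable_indicator_iff measurableSet_Icc]
  exact Continuous.integrableOn_Icc (by fun_prop)

theorem integral_expKernel_mul_expKernel (hab : a ≠ b) (x y : ℝ) :
    ∫ t, expKernel a x t * expKernel b t y = hypoexpKernel a b x y := by
  rw [expKernel_mul_expKernel, integral_indicator measurableSet_Icc, integral_const_mul,
    hypoexpKernel]
  split_ifs with hyx
  · have hab' : a - b ≠ 0 := sub_ne_zero.2 hab
    rw [integral_Icc_eq_integral_Ioc, ← intervalIntegral.integral_of_le hyx,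
      intervalIntegral.integral_comp_mul_left (fun t => exp t) hab', integral_exp, smul_eq_mul,
      mul_left_comm, mul_sub, ← exp_add, ← exp_add, ← neg_sub a b, div_neg, inv_mul_eq_div,
      ← neg_div, neg_sub]
    ring_nf
  · rw [Set.Icc_eq_empty hyx, setIntegral_empty, mul_zero]

theorem isTNKernel_hypoexpKernel (hab : a ≠ b) : IsTNKernel (hypoexpKernel a b) := by
  have := (isTNKernel_expKernel a).integral_mul (isTNKernel_expKernel b) (μ := volume)
    (integrable_expKernel_mul_expKernel a b)
  simpa only [integral_expKernel_mul_expKernel hab] using! this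

theorem hypoexpKernel_mul_hypoexpKernel (a b : ℝ) {x y : ℝ} (hxy : x ≤ y) :
    (fun t => hypoexpKernel a b x t * hypoexpKernel a b y t) =
      (Set.Iic x).indicator fun t => ((b - a) ^ 2)⁻¹ *
        (exp (-(a * (x + y))) * exp (2 * a * t) -
          (exp (-(a * x + b * y)) + exp (-(b * x + a * y))) * exp ((a + b) * t) +
          exp (-(b * (x + y))) * exp (2 * b * t)) := by
  ext t
  by_cases ht : t ≤ x
  · rw [Set.indicator_of_mem (Set.mem_Iic.2 ht), hypoexpKernel, hypoexpKernel, if_pos ht,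
      if_pos (ht.trans hxy), div_mul_div_comm, div_eq_inv_mul, ← sq]
    simp only [sub_mul, mul_sub, add_mul, ← exp_add]
    ring_nf
  · rw [Set.indicator_of_notMem (by simpa using ht), hypoexpKernel, if_neg ht, zero_mul]

theorem integrable_hypoexpKernel_mul_hypoexpKernel_of_le (ha : 0 < a) (hb : 0 < b) {x y : ℝ}
    (hxy : x ≤ y) : Integrable fun t => hypoexpKernel a b x t * hypoexpKernel a b y t := by
  rw [hypoexpKernel_mul_hypoexpKernel a b hxy, integrable_indicator_iff measurableSet_Iic]
  have integrableOn_exp {c : ℝ} (hc : 0 < c) := integrableOn_exp_mul_Iic hc x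
  exact ((((integrableOn_exp (by positivity)).const_mul _).sub
    ((integrableOn_exp (by positivity)).const_mul _)).add
    ((integrableOn_exp (by positivity)).const_mul _)).const_mul _

theorem integral_hypoexpKernel_mul_hypoexpKernel_of_le (ha : 0 < a) (hb : 0 < b) (hab : a ≠ b)
    {x y : ℝ} (hxy : x ≤ y) : ∫ t, hypoexpKernel a b x t * hypoexpKernel a b y t =
      (2 * a * b * (b ^ 2 - a ^ 2))⁻¹ * biexp a b (x - y) := by
  have haa : 0 < 2 * a := by positivity
  have hab₀ : 0 < a + b := by positivity
  have hbb : 0 < 2 * b := by positivity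
  have iaa := (integrableOn_exp_mul_Iic haa x).const_mul (exp (-(a * (x + y))))
  have iab := (integrableOn_exp_mul_Iic hab₀ x).const_mul
    (exp (-(a * x + b * y)) + exp (-(b * x + a * y)))
  have ibb := (integrableOn_exp_mul_Iic hbb x).const_mul (exp (-(b * (x + y))))
  have hsub : b - a ≠ 0 := sub_ne_zero.2 hab.symm
  have hsq : b ^ 2 - a ^ 2 ≠ 0 := by rw [sq_sub_sq]; exact mul_ne_zero (by positivity) hsub
  rw [hypoexpKernel_mul_hypoexpKernel a b hxy, integral_indicator measurableSet_Iic,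
    integral_const_mul, integral_add (by exact iaa.sub iab) ibb, integral_sub iaa iab]
  simp only [integral_const_mul, integral_exp_mul_Iic haa, integral_exp_mul_Iic hab₀,
    integral_exp_mul_Iic hbb]
  simp only [mul_div_assoc', add_mul, ← exp_add]
  rw [biexp, abs_sub_comm, abs_of_nonneg (sub_nonneg.2 hxy)]
  field_simp
  ring_nf

theorem integrable_hypoexpKernel_mul_hypoexpKernel (ha : 0 < a) (hb : 0 < b) (x y : ℝ) :
    Integrable fun t => hypoexpKernel a b x t * hypoexpKernel a b y t := by
  rcases le_total x y with hxy | hyx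
  · exact integrable_hypoexpKernel_mul_hypoexpKernel_of_le ha hb hxy
  · simpa only [mul_comm] using integrable_hypoexpKernel_mul_hypoexpKernel_of_le ha hb hyx

theorem integral_hypoexpKernel_mul_hypoexpKernel (ha : 0 < a) (hb : 0 < b) (hab : a ≠ b)
    (x y : ℝ) : ∫ t, hypoexpKernel a b x t * hypoexpKernel a b y t =
      (2 * a * b * (b ^ 2 - a ^ 2))⁻¹ * biexp a b (x - y) := by
  rcases le_total x y with hxy | hyx
  · exact integral_hypoexpKernel_mul_hypoexpKernel_of_le ha hb hab hxy
  · rw [← neg_sub y x, biexp_neg, ← integral_hypoexpKernel_mul_hypoexpKernel_of_le ha hb hab hyx]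
    simp only [mul_comm]

theorem isTNKernel_biexp_sub (ha : 0 < a) (hab : a < b) :
    IsTNKernel fun x y => biexp a b (x - y) := by
  have hb := ha.trans hab
  have hH := isTNKernel_hypoexpKernel hab.ne
  have hc : 0 < 2 * a * b * (b ^ 2 - a ^ 2) := by
    have := pow_lt_pow_left₀ hab ha.le two_ne_zero
    have := sub_pos.2 this
    positivity
  have scaled := (hH.integral_mul hH.swap
    (integrable_hypoexpKernel_mul_hypoexpKernel ha hb)).mul_mul
      (fun _ => hc.le) fun _ => zero_le_one
  simpa only [integral_hypoexpKernel_mul_hypoexpKernel ha hb hab.ne, one_mul,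
    mul_inv_cancel_left₀ hc.ne'] using scaled

theorem continuous_biexp (a b : ℝ) : Continuous (biexp a b) := by
  unfold biexp
  fun_prop

theorem biexp_pos (ha : 0 < a) (hab : a < b) (x : ℝ) : 0 < biexp a b x :=
  sub_pos.2 <| mul_lt_mul hab
    (exp_le_exp.2 (neg_le_neg (mul_le_mul_of_nonneg_right hab.le (abs_nonneg x)))) (exp_pos _)
    (ha.trans hab).le

theorem integrable_exp_neg_mul_abs (ha : 0 < a) : Integrable fun x : ℝ => exp (-(a * |x|)) := by
  rw [← integrableOn_univ, ← Set.Iic_union_Ioi (a := (0 : ℝ))]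
  refine IntegrableOn.union ?_ ?_
  · refine (integrableOn_exp_mul_Iic ha 0).congr_fun (fun x hx => ?_) measurableSet_Iic
    simp only [abs_of_nonpos (Set.mem_Iic.1 hx), mul_neg, neg_neg]
  · refine (integrableOn_exp_mul_Ioi (neg_neg_of_pos ha) 0).congr_fun (fun x hx => ?_)
      measurableSet_Ioi
    simp only [abs_of_pos (Set.mem_Ioi.1 hx), neg_mul]

theorem hasDerivAt_biexp_of_pos (a b : ℝ) {x : ℝ} (hx : 0 < x) :
    HasDerivAt (biexp a b) (a * b * (exp (-(b * x)) - exp (-(a * x)))) x := by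
  have hexp (c : ℝ) : HasDerivAt (fun x => exp (-(c * x))) (exp (-(c * x)) * -(c * 1)) x :=
    ((hasDerivAt_id x).const_mul c).neg.exp
  have hderiv := ((hexp a).const_mul b).sub ((hexp b).const_mul a)
  refine (hderiv.congr_of_eventuallyEq ?_).congr_deriv (by ring)
  filter_upwards [lt_mem_nhds hx] with y hy
  simp only [biexp, abs_of_pos hy, Pi.sub_apply]

theorem strictAntiOn_biexp (ha : 0 < a) (hab : a < b) :
    StrictAntiOn (biexp a b) (Set.Ici 0) := by
  refine strictAntiOn_of_deriv_neg (convex_Ici 0) (continuous_biexp a b).continuousOn fun x hx => ?_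
  rw [interior_Ici, Set.mem_Ioi] at hx
  rw [(hasDerivAt_biexp_of_pos a b hx).deriv]
  refine mul_neg_of_pos_of_neg (mul_pos ha (ha.trans hab)) (sub_neg.2 (exp_lt_exp.2 ?_))
  exact neg_lt_neg (mul_lt_mul_of_pos_right hab hx)

theorem strictMonoOn_biexp (ha : 0 < a) (hab : a < b) :
    StrictMonoOn (biexp a b) (Set.Iic 0) := fun x hx y hy hxy => by
  rw [← biexp_neg a b x, ← biexp_neg a b y]
  exact strictAntiOn_biexp ha hab (Set.mem_Ici.2 (neg_nonneg.2 hy))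
    (Set.mem_Ici.2 (neg_nonneg.2 hx)) (neg_lt_neg hxy)

theorem isPolyaFrequencyFunction_biexp (ha : 0 < a) (hab : a < b) :
    IsPolyaFrequencyFunction (biexp a b) :=
  ⟨((integrable_exp_neg_mul_abs ha).const_mul b).sub
      ((integrable_exp_neg_mul_abs (ha.trans hab)).const_mul a),
    fun x => (biexp_pos ha hab x).le,
    ⟨0, 1, zero_ne_one, (biexp_pos ha hab 0).ne', (biexp_pos ha hab 1).ne'⟩,
    isTNKernel_biexp_sub ha hab⟩

end Biexp

section PowersOfBiexp

open Set

/-- The kernel `biexp 1 2 (x - y)` in the variables `s = exp x` and `t = exp y`, rescaled so that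
it is the linear form `2 * s - t` on `0 < t ≤ s`. -/
noncomputable def logBiexpKernel (s t : ℝ) : ℝ := s ^ 2 * (t⁻¹ * biexp 1 2 (log s - log t))

variable {s t : ℝ} {n : ℕ}

theorem biexp_one_two_log_sub_log (hs : 0 < s) (hst : s ≤ t) :
    biexp 1 2 (log s - log t) = s / t * (2 - s / t) := by
  have ht := hs.trans_le hst
  have hlog := log_le_log hs hst
  rw [biexp, abs_of_nonpos (sub_nonpos.2 hlog), one_mul, neg_neg, mul_neg, neg_neg,
    ← log_div hs.ne' ht.ne', ← Nat.cast_ofNat, exp_nat_mul, exp_log (div_pos hs ht)]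
  push_cast
  ring

theorem logBiexpKernel_of_le (hs : 0 < s) (hst : s ≤ t) :
    logBiexpKernel s t = s ^ 3 * (2 * t - s) / t ^ 3 := by
  have ht := hs.trans_le hst
  rw [logBiexpKernel, biexp_one_two_log_sub_log hs hst]
  field_simp

theorem logBiexpKernel_of_ge (ht : 0 < t) (hts : t ≤ s) : logBiexpKernel s t = 2 * s - t := by
  have hs := ht.trans_le hts
  rw [logBiexpKernel, ← neg_sub, biexp_neg, biexp_one_two_log_sub_log ht hts]
  field_simp

theorem isTNKernel_logBiexpKernel_pow (h : IsTNKernel fun x y => biexp 1 2 (x - y) ^ n) :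
    IsTNKernel fun s t : Ioi (0 : ℝ) => logBiexpKernel s t ^ n := by
  have strictMono_log : StrictMono fun s : Ioi (0 : ℝ) => log s :=
    fun s _ hst => log_lt_log s.2 hst
  simpa only [logBiexpKernel, mul_pow] using
    (h.comp strictMono_log strictMono_log).mul_mul (p := fun s => (s ^ 2 : ℝ) ^ n)
      (q := fun t => (t⁻¹ : ℝ) ^ n) (fun s => by positivity)
      fun t => pow_nonneg (inv_nonneg.2 t.2.le) n

theorem neg_one_pow_mul_det_logBiexpKernel_pow_sub_nonneg
    (h : IsTNKernel fun x y => biexp 1 2 (x - y) ^ n) {m : ℕ} {x y : Fin m → Ioi (0 : ℝ)}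
    (hx : StrictMono x) (hy : StrictMono y) (hxy : ∀ i j, x i < y j) :
    0 ≤ (-1) ^ (m * (n + 1)) * (of fun i j =>
      logBiexpKernel (x i) (y j) ^ n - (2 * x i - y j : ℝ) ^ n).det := by
  simp only [sub_eq_add_neg (2 * _ : ℝ)]
  refine (isTNKernel_logBiexpKernel_pow h).neg_one_pow_mul_det_sub_add_pow_nonneg
    (f := fun s => 2 * s) (g := fun t => -t) (fun s t hst => ?_) (fun s t hst => ?_)
    (fun s t hts => ?_) hx hy hxy
  · exact Subtype.ext (mul_left_cancel₀ two_ne_zero hst)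
  · exact Subtype.ext (neg_injective hst)
  · rw [logBiexpKernel_of_ge t.2 hts, sub_eq_add_neg]

theorem not_isTNKernel_biexp_sub_pow_of_even (hn : Even n) (hn₀ : n ≠ 0) :
    ¬ IsTNKernel fun x y => biexp 1 2 (x - y) ^ n := fun h => by
  let x : Fin 1 → Ioi (0 : ℝ) := ![⟨1, by simp⟩]
  let y : Fin 1 → Ioi (0 : ℝ) := ![⟨2, by simp⟩]
  have minor_nonneg := neg_one_pow_mul_det_logBiexpKernel_pow_sub_nonneg h (x := x) (y := y)
    (Subsingleton.strictMono x) (Subsingleton.strictMono y) (by simp [x, y])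
  have minor_nonpos : logBiexpKernel 1 2 ^ n ≤ 0 := by
    simpa [x, y, hn.add_one.neg_one_pow, hn₀] using minor_nonneg
  refine minor_nonpos.not_gt (pow_pos ?_ n)
  rw [logBiexpKernel_of_le one_pos one_le_two]
  norm_num

theorem not_isTNKernel_biexp_sub_pow_of_odd (hn : Odd n) (hn₁ : n ≠ 1) :
    ¬ IsTNKernel fun x y => biexp 1 2 (x - y) ^ n := fun h => by
  have three_le : 3 ≤ n := by obtain ⟨k, rfl⟩ := hn; omega
  let x : Fin 2 → Ioi (0 : ℝ) := ![⟨2, by simp⟩, ⟨3, by simp⟩]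
  let y : Fin 2 → Ioi (0 : ℝ) := ![⟨6, by simp⟩, ⟨7, by simp⟩]
  have minor_nonneg := neg_one_pow_mul_det_logBiexpKernel_pow_sub_nonneg h (x := x) (y := y)
    (Fin.strictMono_iff_lt_succ.2 (by norm_num [x]))
    (Fin.strictMono_iff_lt_succ.2 (by norm_num [y])) (by norm_num [x, y, Fin.forall_fin_two])
  rw [(hn.add_one.mul_left 2).neg_one_pow, one_mul, det_fin_two] at minor_nonneg
  have minor_le : (logBiexpKernel 2 7 ^ n + 3 ^ n) * logBiexpKernel 3 6 ^ n ≤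
      (logBiexpKernel 2 6 ^ n + 2 ^ n) * (logBiexpKernel 3 7 ^ n + 1) := by
    norm_num [x, y, hn.neg_pow, hn.pos.ne'] at minor_nonneg
    linarith
  have kernel_two_six : logBiexpKernel 2 6 = 10 / 27 := by
    rw [logBiexpKernel_of_le] <;> norm_num
  have kernel_two_seven : logBiexpKernel 2 7 = 96 / 343 := by
    rw [logBiexpKernel_of_le] <;> norm_num
  have kernel_three_six : logBiexpKernel 3 6 = 9 / 8 := by
    rw [logBiexpKernel_of_le] <;> norm_num
  have kernel_three_seven : logBiexpKernel 3 7 = 297 / 343 := by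
    rw [logBiexpKernel_of_le] <;> norm_num
  rw [kernel_two_six, kernel_two_seven, kernel_three_six, kernel_three_seven] at minor_le
  refine minor_le.not_gt ?_
  calc
    ((10 / 27) ^ n + 2 ^ n) * ((297 / 343) ^ n + 1) ≤ (2 ^ n + 2 ^ n) * (1 + 1 : ℝ) := by
      gcongr
      · norm_num
      · exact pow_le_one₀ (by norm_num) (by norm_num)
    _ = 4 * 2 ^ n := by ring
    _ < (27 / 16) ^ 3 * 2 ^ n := by gcongr; norm_num
    _ ≤ (27 / 16) ^ n * 2 ^ n := by gcongr; norm_num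
    _ = 3 ^ n * (9 / 8) ^ n := by rw [← mul_pow, ← mul_pow]; norm_num
    _ ≤ ((96 / 343) ^ n + 3 ^ n) * (9 / 8) ^ n := by
      gcongr
      exact le_add_of_nonneg_left (by positivity)

theorem not_isTNKernel_biexp_sub_pow (hn : 2 ≤ n) :
    ¬ IsTNKernel fun x y => biexp 1 2 (x - y) ^ n := by
  rcases n.even_or_odd with heven | hodd
  · exact not_isTNKernel_biexp_sub_pow_of_even heven (by omega)
  · exact not_isTNKernel_biexp_sub_pow_of_odd hodd (by omega)

end PowersOfBiexp

theorem stmt_13 :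
    IsPolyaFrequencyFunction (fun x => 2 * Real.exp (-|x|) - Real.exp (-(2 * |x|))) ∧
    (∀ x : ℝ, 2 * Real.exp (-|(-x)|) - Real.exp (-(2 * |(-x)|)) =
      2 * Real.exp (-|x|) - Real.exp (-(2 * |x|))) ∧
    Continuous (fun x : ℝ => 2 * Real.exp (-|x|) - Real.exp (-(2 * |x|))) ∧
    (∀ x : ℝ, 2 * Real.exp (-|x|) - Real.exp (-(2 * |x|)) ≠ 0) ∧
    StrictMonoOn (fun x : ℝ => 2 * Real.exp (-|x|) - Real.exp (-(2 * |x|)))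
      (Set.Iic 0) ∧
    StrictAntiOn (fun x : ℝ => 2 * Real.exp (-|x|) - Real.exp (-(2 * |x|)))
      (Set.Ici 0) ∧
    (∀ n : ℕ, 2 ≤ n →
      ¬ IsPolyaFrequencyFunction
          fun x => (2 * Real.exp (-|x|) - Real.exp (-(2 * |x|))) ^ n) := by
  have eq_biexp (x : ℝ) : 2 * exp (-|x|) - exp (-(2 * |x|)) = biexp 1 2 x := by
    rw [biexp, one_mul, one_mul]
  simp only [eq_biexp]
  exact ⟨isPolyaFrequencyFunction_biexp one_pos one_lt_two, biexp_neg 1 2, continuous_biexp 1 2,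
    fun x => (biexp_pos one_pos one_lt_two x).ne', strictMonoOn_biexp one_pos one_lt_two,
    strictAntiOn_biexp one_pos one_lt_two,
    fun n hn h => not_isTNKernel_biexp_sub_pow hn h.2.2.2⟩
end
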